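/- arXiv:1306.2674 — 8 statements merged into one kernel-verified Lean document; each statement's English description precedes it below -/
import Mathlib

section
/- Let (μ_n)_{n≥1} be a sequence of Borel probability measures on ℝ, each infinitely divisible with respect to classical convolution (i.e., for every n and every m ≥ 1 there exists a Borel probability measure ν with μ_n equal to the m-fold convolution ν ∗ ν ∗ ⋯ ∗ ν). Assume each μ_n has mean 0 (∫ x dμ_n = 0), variance 1 (∫ x² dμ_n = 1), finite fourth moment, and ∫ x⁴ dμ_n → 3 as n → ∞. Then μ_n converges weakly to the standard Gaussian measure N(0,1) on ℝ. -/
open MeasureTheory Filter Topology BoundedContinuousFunction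

/-- Classical convolution of two Borel measures on ℝ: the pushforward of the
product measure under addition. -/
noncomputable def classicalConv (μ ν : Measure ℝ) : Measure ℝ :=
  (μ.prod ν).map (fun p => p.1 + p.2)

/-- The m-fold classical convolution power of a measure (0th power is δ₀). -/
noncomputable def convPow (ν : Measure ℝ) : ℕ → Measure ℝ
  | 0 => Measure.dirac 0
  | n + 1 => classicalConv (convPow ν n) ν

/-- A probability measure is classically infinitely divisible if for every m ≥ 1 it
is the m-fold classical convolution power of some probability measure. -/
def IsClassicallyInfDiv (μ : Measure ℝ) : Prop :=
  ∀ m : ℕ, 1 ≤ m → ∃ ν : Measure ℝ, IsProbabilityMeasure ν ∧ μ = convPow ν m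

/-- Weak convergence of a sequence of measures: convergence of integrals of all
bounded continuous functions. -/
def WeakConv (μs : ℕ → Measure ℝ) (μ : Measure ℝ) : Prop :=
  ∀ f : ℝ →ᵇ ℝ, Tendsto (fun n => ∫ x, f x ∂(μs n)) atTop (𝓝 (∫ x, f x ∂μ))

lemma convPow_prob (ν : Measure ℝ) [IsProbabilityMeasure ν] (k : ℕ) :
    IsProbabilityMeasure (convPow ν k) := by
  induction k with
  | zero => unfold convPow; infer_instance
  | succ k ih =>
    unfold convPow classicalConv
    exact Measure.isProbabilityMeasure_map (by fun_prop)

lemma charFun_convPow (ν : Measure ℝ) [IsProbabilityMeasure ν] (k : ℕ) (t : ℝ) :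
    charFun (convPow ν k) t = charFun ν t ^ k := by
  induction k with
  | zero => simp [convPow]
  | succ k ih =>
    have := convPow_prob ν k
    have h := charFun_conv (μ := convPow ν k) (ν := ν) t
    rw [pow_succ, ← ih, ← h]
    rfl

lemma integrable_conv_iff (ρ ν : Measure ℝ) (k : ℕ) :
    Integrable (fun x => x ^ k) (classicalConv ρ ν) ↔
      Integrable (fun p : ℝ × ℝ => (p.1 + p.2) ^ k) (ρ.prod ν) := by
  unfold classicalConv
  rw [integrable_map_measure (by fun_prop) (by fun_prop)]
  rfl

lemma integral_conv_pow (ρ ν : Measure ℝ) (k : ℕ) :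
    ∫ x, x ^ k ∂(classicalConv ρ ν) = ∫ p : ℝ × ℝ, (p.1 + p.2) ^ k ∂(ρ.prod ν) := by
  unfold classicalConv
  rw [integral_map (by fun_prop) (by fun_prop)]

lemma shift_int (ν : Measure ℝ) [IsProbabilityMeasure ν] (x : ℝ)
    (h : Integrable (fun y => (x + y) ^ 4) ν) : Integrable (fun y => y ^ 4) ν := by
  have h2 : Integrable (fun y => 8 * ((x + y) ^ 4 + x ^ 4)) ν :=
    (h.add (integrable_const _)).const_mul 8
  refine h2.mono' (by fun_prop) (ae_of_all _ fun y => ?_)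
  rw [Real.norm_of_nonneg (by positivity)]
  nlinarith [sq_nonneg ((x + y)^2 - x^2), sq_nonneg (x + y + x), sq_nonneg ((x+y)^2+x^2),
    mul_nonneg (sq_nonneg (x+y+x)) (add_nonneg (sq_nonneg (x+y)) (sq_nonneg x)),
    mul_nonneg (sq_nonneg (x+y+x)) (sq_nonneg y)]

lemma conv_int4_right (ρ ν : Measure ℝ) [IsProbabilityMeasure ρ] [IsProbabilityMeasure ν]
    (h : Integrable (fun x => x ^ 4) (classicalConv ρ ν)) :
    Integrable (fun x => x ^ 4) ν := by
  rw [integrable_conv_iff] at h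
  obtain ⟨x, hx⟩ := h.prod_right_ae.exists
  exact shift_int ν x hx

lemma pow_int (ν : Measure ℝ) [IsProbabilityMeasure ν]
    (h : Integrable (fun x => x ^ 4) ν) (k : ℕ) (hk : k ≤ 4) :
    Integrable (fun x => x ^ k) ν := by
  refine (h.add (integrable_const (1 : ℝ))).mono' (by fun_prop) (ae_of_all _ fun x => ?_)
  simp only [norm_pow, Real.norm_eq_abs, Pi.add_apply]
  have h4 : x ^ 4 = |x| ^ 4 := by rw [Even.pow_abs (by decide)]
  rw [h4]
  rcases le_total |x| 1 with h1 | h1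
  · have := pow_le_one₀ (n := k) (abs_nonneg x) h1
    have : 0 ≤ |x| ^ 4 := by positivity
    linarith
  · have := pow_le_pow_right₀ h1 hk
    linarith

lemma prod_pow_int (ρ ν : Measure ℝ) [IsProbabilityMeasure ρ] [IsProbabilityMeasure ν]
    (hρ : Integrable (fun x => x ^ 4) ρ) (hν : Integrable (fun x => x ^ 4) ν)
    (i j : ℕ) (hi : i ≤ 4) (hj : j ≤ 4) :
    Integrable (fun p : ℝ × ℝ => p.1 ^ i * p.2 ^ j) (ρ.prod ν) :=
  (pow_int ρ hρ i hi).mul_prod (pow_int ν hν j hj)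

lemma conv_moments (ρ ν : Measure ℝ) [IsProbabilityMeasure ρ] [IsProbabilityMeasure ν]
    (hρ : Integrable (fun x => x ^ 4) ρ) (hν : Integrable (fun x => x ^ 4) ν)
    (k : ℕ) (hk : k ≤ 4) :
    Integrable (fun x => x ^ k) (classicalConv ρ ν) ∧
    ∫ x, x ^ k ∂(classicalConv ρ ν) =
      ∑ i ∈ Finset.range (k + 1), (∫ x, x ^ i ∂ρ) * (∫ x, x ^ (k - i) ∂ν) * (k.choose i) := by
  have hI : ∀ i ∈ Finset.range (k + 1), Integrable
      (fun p : ℝ × ℝ => p.1 ^ i * p.2 ^ (k - i) * (k.choose i : ℝ)) (ρ.prod ν) := by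
    intro i hi
    have := Finset.mem_range.1 hi
    exact (prod_pow_int ρ ν hρ hν i (k - i) (by omega) (by omega)).mul_const _
  rw [integrable_conv_iff, integral_conv_pow]
  simp_rw [add_pow]
  refine ⟨integrable_finsetSum _ hI, ?_⟩
  rw [integral_finsetSum _ hI]
  refine Finset.sum_congr rfl fun i _ => ?_
  rw [integral_mul_const, integral_prod_mul (fun x : ℝ => x ^ i) (fun x : ℝ => x ^ (k - i))]

lemma convPow_moments (ν : Measure ℝ) [IsProbabilityMeasure ν]
    (hν : Integrable (fun x => x ^ 4) ν) (k : ℕ) :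
    Integrable (fun x => x ^ 4) (convPow ν k) ∧
    ∫ x, x ^ 1 ∂(convPow ν k) = k * ∫ x, x ^ 1 ∂ν ∧
    (∫ x, x ^ 1 ∂ν = 0 → ∫ x, x ^ 2 ∂(convPow ν k) = k * ∫ x, x ^ 2 ∂ν ∧
      ∫ x, x ^ 4 ∂(convPow ν k) = k * ∫ x, x ^ 4 ∂ν + 3 * k * (k - 1) * (∫ x, x ^ 2 ∂ν) ^ 2) := by
  induction k with
  | zero => simp [convPow, integrable_dirac]
  | succ k ih =>
    have := convPow_prob ν k
    obtain ⟨h4, h1, h⟩ := ih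
    have e1 := conv_moments (convPow ν k) ν h4 hν 1 (by norm_num)
    have e2 := conv_moments (convPow ν k) ν h4 hν 2 (by norm_num)
    have e4 := conv_moments (convPow ν k) ν h4 hν 4 (by norm_num)
    have e0 : ∀ ρ : Measure ℝ, IsProbabilityMeasure ρ → ∫ x : ℝ, x ^ 0 ∂ρ = 1 := by
      intro ρ _; simp
    simp only [Finset.sum_range_succ, Finset.sum_range_zero, Nat.choose, Nat.sub_self,
      Nat.reduceSub, Nat.reduceAdd, e0 ν inferInstance, e0 _ this] at e1 e2 e4
    refine ⟨e4.1, ?_, ?_⟩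
    · unfold convPow
      rw [e1.2, h1]; push_cast; ring
    · intro h0
      obtain ⟨h2, h44⟩ := h h0
      unfold convPow
      rw [e2.2, e4.2, h2, h44, h1, h0]
      constructor <;> (push_cast; ring)

lemma exp_est (y : ℝ) :
    ‖Complex.exp (y * Complex.I) - (1 + y * Complex.I - (y ^ 2 / 2 : ℝ))‖ ≤ 4 * |y| ^ 3 := by
  rcases le_total |y| 1 with h | h
  · have := Complex.exp_bound (x := y * Complex.I) (by simpa using h) (n := 3) (by norm_num)
    have e : ∑ m ∈ Finset.range 3, ((y : ℂ) * Complex.I) ^ m / (m.factorial : ℂ)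
        = 1 + y * Complex.I - (y ^ 2 / 2 : ℝ) := by
      simp [Finset.sum_range_succ, mul_pow, Nat.factorial]
      ring
    rw [e] at this
    refine this.trans ?_
    simp [Nat.factorial]
    have : 0 ≤ |y| ^ 3 := by positivity
    norm_num
    nlinarith
  · have a1 := Complex.norm_exp_ofReal_mul_I y
    have a2 := norm_sub_le (Complex.exp (y * Complex.I)) (1 + y * Complex.I - (y ^ 2 / 2 : ℝ))
    have a3 := norm_sub_le (1 + y * Complex.I) (((y ^ 2 / 2 : ℝ)) : ℂ)
    have a4 := norm_add_le (1 : ℂ) (y * Complex.I)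
    have a5 : ‖(y : ℂ) * Complex.I‖ = |y| := by simp
    have a6 : ‖(((y ^ 2 / 2 : ℝ)) : ℂ)‖ = |y| ^ 2 / 2 := by
      rw [Complex.norm_real, Real.norm_of_nonneg (by positivity), sq_abs]
    rw [norm_one] at a4
    have b1 : |y| ≤ |y| ^ 3 := le_self_pow₀ h (by norm_num)
    have b2 : |y| ^ 2 ≤ |y| ^ 3 := pow_le_pow_right₀ h (by norm_num)
    linarith

lemma pow_sub_est (z w : ℂ) (hz : ‖z‖ ≤ 1) (hw : ‖w‖ ≤ 1) (m : ℕ) :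
    ‖z ^ m - w ^ m‖ ≤ m * ‖z - w‖ := by
  induction m with
  | zero => simp
  | succ m ih =>
    have e : z ^ (m + 1) - w ^ (m + 1) = z ^ m * (z - w) + (z ^ m - w ^ m) * w := by ring
    rw [e]
    refine (norm_add_le _ _).trans ?_
    rw [norm_mul, norm_mul, norm_pow]
    have h1 : ‖z‖ ^ m ≤ 1 := pow_le_one₀ (norm_nonneg _) hz
    have h2 : ‖z‖ ^ m * ‖z - w‖ ≤ 1 * ‖z - w‖ := by gcongr
    have h3 : ‖z ^ m - w ^ m‖ * ‖w‖ ≤ ‖z ^ m - w ^ m‖ * 1 := by gcongr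
    push_cast
    linarith

lemma charFun_est (ν : Measure ℝ) [IsProbabilityMeasure ν]
    (hν : Integrable (fun x => x ^ 4) ν) (h1 : ∫ x, x ^ 1 ∂ν = 0) (t ε : ℝ) (hε : 0 < ε) :
    ‖charFun ν t - ((1 - t ^ 2 / 2 * ∫ x, x ^ 2 ∂ν : ℝ) : ℂ)‖ ≤
      2 * |t| ^ 3 * (ε * ∫ x, x ^ 2 ∂ν + (∫ x, x ^ 4 ∂ν) / ε) := by
  have i1 := pow_int ν hν 1 (by norm_num)
  have i2 := pow_int ν hν 2 (by norm_num)
  have iexp : Integrable (fun x : ℝ => Complex.exp (t * x * Complex.I)) ν := by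
    refine (integrable_const (1 : ℝ)).mono' (by fun_prop) (ae_of_all _ fun x => ?_)
    have := Complex.norm_exp_ofReal_mul_I (t * x)
    push_cast at this
    exact this.le
  have i1' : Integrable (fun x : ℝ => (t * Complex.I) * ((x ^ 1 : ℝ) : ℂ)) ν :=
    (i1.ofReal (𝕜 := ℂ)).const_mul _
  have i2' : Integrable (fun x : ℝ => ((t ^ 2 / 2 * x ^ 2 : ℝ) : ℂ)) ν :=
    (i2.const_mul (t ^ 2 / 2)).ofReal (𝕜 := ℂ)
  have i0 : Integrable (fun _ : ℝ => (1 : ℂ)) ν := integrable_const _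
  have e : charFun ν t - ((1 - t ^ 2 / 2 * ∫ x, x ^ 2 ∂ν : ℝ) : ℂ) =
      ∫ x : ℝ, (Complex.exp (t * x * Complex.I) -
        ((1 + (t * Complex.I) * ((x ^ 1 : ℝ) : ℂ)) - ((t ^ 2 / 2 * x ^ 2 : ℝ) : ℂ))) ∂ν := by
    have j1 : Integrable (fun x : ℝ => 1 + (t * Complex.I) * ((x ^ 1 : ℝ) : ℂ)) ν := i0.add i1'
    have j2 : Integrable (fun x : ℝ => 1 + (t * Complex.I) * ((x ^ 1 : ℝ) : ℂ) -
      ((t ^ 2 / 2 * x ^ 2 : ℝ) : ℂ)) ν := j1.sub i2'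
    rw [integral_sub iexp j2, integral_sub j1 i2',
      integral_add i0 i1', integral_const_mul, charFun_apply_real, integral_complex_ofReal,
      integral_complex_ofReal, h1, integral_const_mul]
    simp
  rw [e]
  have ib : Integrable (fun x : ℝ => 2 * |t| ^ 3 * (ε * x ^ 2 + x ^ 4 / ε)) ν :=
    ((i2.const_mul ε).add (hν.div_const ε)).const_mul _
  refine (norm_integral_le_of_norm_le ib (ae_of_all _ fun x => ?_)).trans (le_of_eq ?_)
  · have := exp_est (t * x)
    have e2 : Complex.exp (t * x * Complex.I) -
        ((1 + (t * Complex.I) * ((x ^ 1 : ℝ) : ℂ)) - ((t ^ 2 / 2 * x ^ 2 : ℝ) : ℂ)) =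
        Complex.exp ((t * x : ℝ) * Complex.I) -
          (1 + (t * x : ℝ) * Complex.I - ((t * x) ^ 2 / 2 : ℝ)) := by
      push_cast; ring
    rw [e2]
    refine this.trans ?_
    have key : 2 * |x| ^ 3 ≤ ε * x ^ 2 + x ^ 4 / ε := by
      have : ε * x ^ 2 + x ^ 4 / ε - 2 * |x| ^ 3 = |x| ^ 2 * (ε - |x|) ^ 2 / ε := by
        have h4 : x ^ 4 = |x| ^ 4 := by rw [Even.pow_abs (by decide)]
        rw [h4, ← sq_abs x]
        field_simp
        ring
      have : 0 ≤ |x| ^ 2 * (ε - |x|) ^ 2 / ε := by positivity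
      linarith
    rw [abs_mul, mul_pow]
    calc 4 * (|t| ^ 3 * |x| ^ 3) = 2 * |t| ^ 3 * (2 * |x| ^ 3) := by ring
      _ ≤ _ := by gcongr
  · rw [integral_const_mul, integral_add (i2.const_mul ε) (hν.div_const ε), integral_const_mul,
      integral_div]

lemma main_est (μ : Measure ℝ) (hID : IsClassicallyInfDiv μ)
    (hmom4 : Integrable (fun x => x ^ 4) μ)
    (hmean : ∫ x, x ∂μ = 0) (hvar : ∫ x, x ^ 2 ∂μ = 1) (n : ℕ) (t : ℝ)
    (ht : t ^ 2 ≤ 4 * (n + 1 : ℝ)) (ε : ℝ) (hε : 0 < ε) :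
    ‖charFun μ t - ((1 - t ^ 2 / 2 / (n + 1) : ℝ) : ℂ) ^ (n + 1)‖ ≤
      2 * |t| ^ 3 * (ε + ((∫ x, x ^ 4 ∂μ) - 3 + 3 / (n + 1)) / ε) := by
  obtain ⟨ν, hν, rfl⟩ := hID (n + 1) (by omega)
  have := convPow_prob ν n
  have hn : (0 : ℝ) < n + 1 := by positivity
  have h4 : Integrable (fun x => x ^ 4) ν := conv_int4_right (convPow ν n) ν hmom4
  obtain ⟨-, m1, m⟩ := convPow_moments ν h4 (n + 1)
  have z : ∫ x, x ^ 1 ∂ν = 0 := by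
    simp only [pow_one] at m1 ⊢
    rw [hmean] at m1
    push_cast at m1
    rcases mul_eq_zero.1 m1.symm with h | h
    · linarith
    · exact h
  obtain ⟨m2, m4⟩ := m z
  have v : ∫ x, x ^ 2 ∂ν = 1 / (n + 1) := by
    rw [hvar] at m2
    push_cast at m2
    field_simp
    linarith
  have est := charFun_est ν h4 z t ε hε
  rw [v] at est m4
  rw [charFun_convPow, m4]
  refine (pow_sub_est _ _ (norm_charFun_le_one t) ?_ _).trans ?_
  · rw [Complex.norm_real, Real.norm_eq_abs, abs_le]
    have a : 0 ≤ t ^ 2 / 2 / (n + 1 : ℝ) := by positivity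
    have b : t ^ 2 / 2 / (n + 1 : ℝ) ≤ 2 := by
      rw [div_le_iff₀ hn]; linarith
    constructor <;> linarith
  · rw [mul_one_div] at est
    refine (mul_le_mul_of_nonneg_left est (by positivity)).trans (le_of_eq ?_)
    push_cast
    field_simp
    ring

theorem fourth_moment_three_implies_gaussian
    (μ : ℕ → Measure ℝ)
    (hprob : ∀ n, IsProbabilityMeasure (μ n))
    (hID : ∀ n, IsClassicallyInfDiv (μ n))
    (hmom4 : ∀ n, Integrable (fun x => x ^ 4) (μ n))
    (hmean : ∀ n, ∫ x, x ∂(μ n) = 0)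
    (hvar : ∀ n, ∫ x, x ^ 2 ∂(μ n) = 1)
    (h4 : Tendsto (fun n => ∫ x, x ^ 4 ∂(μ n)) atTop (𝓝 3)) :
    WeakConv μ (ProbabilityTheory.gaussianReal 0 1) := by
  let P : ℕ → ProbabilityMeasure ℝ := fun n => ⟨μ n, hprob n⟩
  let G : ProbabilityMeasure ℝ := ⟨ProbabilityTheory.gaussianReal 0 1, inferInstance⟩
  have key : Tendsto P atTop (𝓝 G) := by
    apply ProbabilityMeasure.tendsto_of_tendsto_charFun
    intro t
    change Tendsto (fun n => charFun (μ n) t) atTop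
      (𝓝 (charFun (ProbabilityTheory.gaussianReal 0 1) t))
    rw [ProbabilityTheory.charFun_gaussianReal]
    have lim1 : Tendsto (fun n : ℕ => ((1 - t ^ 2 / 2 / (n + 1) : ℝ) : ℂ) ^ (n + 1)) atTop
        (𝓝 (Complex.exp (t * (0 : ℝ) * Complex.I - ((1 : NNReal) : ℝ) * t ^ 2 / 2))) := by
      have := (tendsto_add_atTop_iff_nat 1).2
        (Complex.tendsto_one_add_div_pow_exp (-(t ^ 2 / 2 : ℂ)))
      convert this using 2
      · push_cast; ring
      · congr 1; simp
    have linv : Tendsto (fun n : ℕ => 3 / ((n : ℝ) + 1)) atTop (𝓝 0) :=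
      tendsto_const_nhds.div_atTop
        (tendsto_atTop_add_const_right _ _ tendsto_natCast_atTop_atTop)
    have leps : Tendsto (fun n : ℕ => 2 * |t| ^ 3 *
        (2 * √(|(∫ x, x ^ 4 ∂(μ n)) - 3| + 3 / (n + 1)))) atTop (𝓝 0) := by
      have h3 := ((h4.sub_const 3).abs.add linv).sqrt
      have := (h3.const_mul 2).const_mul (2 * |t| ^ 3)
      simpa using this
    have lim2 : Tendsto (fun n : ℕ => charFun (μ n) t -
        ((1 - t ^ 2 / 2 / (n + 1) : ℝ) : ℂ) ^ (n + 1)) atTop (𝓝 0) := by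
      apply squeeze_zero_norm' _ leps
      filter_upwards [eventually_ge_atTop ⌈t ^ 2⌉₊] with n hn
      have hn' : t ^ 2 ≤ n := Nat.ceil_le.1 hn
      have hp : (0 : ℝ) < |(∫ x, x ^ 4 ∂(μ n)) - 3| + 3 / ((n : ℝ) + 1) := by positivity
      refine (main_est (μ n) (hID n) (hmom4 n) (hmean n) (hvar n) n t
        (by have : (0 : ℝ) ≤ n := by positivity
            linarith) _ (Real.sqrt_pos.2 hp)).trans ?_
      gcongr
      rw [two_mul]
      gcongr
      rw [div_le_iff₀ (Real.sqrt_pos.2 hp), Real.mul_self_sqrt hp.le]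
      gcongr
      exact le_abs_self _
    simpa using lim2.add lim1
  intro f
  exact (ProbabilityMeasure.tendsto_iff_forall_integral_tendsto.1 key) f
end

section
/- Let (μ_n)_{n≥1} be a sequence of Borel probability measures on ℝ with mean 0 (∫ x dμ_n = 0), variance 1 (∫ x² dμ_n = 1), and finite fourth moments satisfying ∫ x⁴ dμ_n → 1 as n → ∞. Then μ_n converges weakly to the symmetric Bernoulli measure b = (1/2)δ_{−1} + (1/2)δ_{1}. -/
open MeasureTheory Filter Topology BoundedContinuousFunction

/-- The symmetric Bernoulli measure b = (1/2)δ₋₁ + (1/2)δ₁. -/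
noncomputable def symmBernoulli : Measure ℝ :=
  (1 / 2 : ENNReal) • Measure.dirac (-1 : ℝ) + (1 / 2 : ENNReal) • Measure.dirac (1 : ℝ)

theorem fmb_bound (f : ℝ →ᵇ ℝ) (ε : ℝ) (hε : 0 < ε) :
    ∃ C : ℝ, 0 ≤ C ∧ ∀ x : ℝ,
      |f x - (f (-1) * (1 - x) / 2 + f 1 * (1 + x) / 2)| ≤ ε + C * (x ^ 4 - 2 * x ^ 2 + 1) := by
  set g : ℝ → ℝ := fun x => f x - (f (-1) * (1 - x) / 2 + f 1 * (1 + x) / 2) with hg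
  have hgc : Continuous g := by
    have := f.continuous
    fun_prop
  have h1 : g 1 = 0 := by simp only [hg]; ring
  have h2 : g (-1) = 0 := by simp only [hg]; ring
  obtain ⟨d1, hd1, H1⟩ := Metric.continuous_iff.1 hgc 1 ε hε
  obtain ⟨d2, hd2, H2⟩ := Metric.continuous_iff.1 hgc (-1) ε hε
  simp only [Real.dist_eq, h1, h2, sub_zero] at H1 H2
  set d := min d1 d2 with hd
  have hdpos : 0 < d := lt_min hd1 hd2
  set M := ‖f‖ with hM
  have hMpos : 0 ≤ M := norm_nonneg f
  have hf : ∀ x, |f x| ≤ M := fun x => f.norm_coe_le_norm x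
  refine ⟨3 * M / d ^ 2, by positivity, fun x => ?_⟩
  change |g x| ≤ _
  have hsq : x ^ 4 - 2 * x ^ 2 + 1 = (x - 1) ^ 2 * (x + 1) ^ 2 := by ring
  have hC : 0 ≤ 3 * M / d ^ 2 * (x ^ 4 - 2 * x ^ 2 + 1) := by rw [hsq]; positivity
  by_cases c1 : |x - 1| < d
  · have := H1 x (c1.trans_le (min_le_left _ _)); linarith
  by_cases c2 : |x - -1| < d
  · have := H2 x (c2.trans_le (min_le_right _ _)); linarith
  push Not at c1 c2
  have e1 : d ^ 2 ≤ (x - 1) ^ 2 := by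
    rw [← sq_abs (x - 1)]; exact pow_le_pow_left₀ hdpos.le c1 2
  have e2 : d ^ 2 ≤ (x + 1) ^ 2 := by
    rw [sub_neg_eq_add] at c2
    rw [← sq_abs (x + 1)]; exact pow_le_pow_left₀ hdpos.le c2 2
  have key : d ^ 2 * (1 + x ^ 2) ≤ x ^ 4 - 2 * x ^ 2 + 1 := by
    rw [hsq]
    rcases le_total 0 x with hx | hx
    · exact mul_le_mul e1 (by nlinarith) (by positivity) (by positivity)
    · rw [mul_comm ((x - 1) ^ 2)]
      exact mul_le_mul e2 (by nlinarith) (by positivity) (by positivity)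
  have up : |g x| ≤ 3 * M * (1 + x ^ 2) := by
    have a1 : |f (-1) * (1 - x)| ≤ M * (1 + |x|) := by
      rw [abs_mul]
      refine mul_le_mul (hf _) ?_ (abs_nonneg _) hMpos
      simpa using abs_sub (1 : ℝ) x
    have a2 : |f 1 * (1 + x)| ≤ M * (1 + |x|) := by
      rw [abs_mul]
      refine mul_le_mul (hf _) ?_ (abs_nonneg _) hMpos
      simpa using abs_add_le (1 : ℝ) x
    have a3 := hf x
    have a4 : |x| ≤ 1 + x ^ 2 := by nlinarith [sq_abs x, sq_nonneg (|x| - 1), abs_nonneg x]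
    have a5 : M * (2 + |x|) ≤ M * (3 * (1 + x ^ 2)) :=
      mul_le_mul_of_nonneg_left (by nlinarith [sq_nonneg x]) hMpos
    rw [abs_le] at a1 a2 a3 ⊢
    simp only [hg]
    constructor <;> linarith [a1.1, a1.2, a2.1, a2.2, a3.1, a3.2]
  have : 3 * M * (1 + x ^ 2) ≤ 3 * M / d ^ 2 * (x ^ 4 - 2 * x ^ 2 + 1) := by
    rw [div_mul_eq_mul_div, le_div_iff₀ (by positivity)]
    nlinarith [mul_le_mul_of_nonneg_left key (by positivity : 0 ≤ 3 * M)]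
  linarith

theorem fourth_moment_one_implies_bernoulli
    (μ : ℕ → Measure ℝ)
    (hprob : ∀ n, IsProbabilityMeasure (μ n))
    (hmom4 : ∀ n, Integrable (fun x => x ^ 4) (μ n))
    (hmean : ∀ n, ∫ x, x ∂(μ n) = 0)
    (hvar : ∀ n, ∫ x, x ^ 2 ∂(μ n) = 1)
    (h4 : Tendsto (fun n => ∫ x, x ^ 4 ∂(μ n)) atTop (𝓝 1)) :
    WeakConv μ symmBernoulli := by
  intro f
  have hb : ∫ x, f x ∂symmBernoulli = (f (-1) + f 1) / 2 := by
    unfold symmBernoulli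
    rw [integral_add_measure, integral_smul_measure, integral_smul_measure, integral_dirac,
      integral_dirac]
    · simp; ring
    · exact (f.integrable _).smul_measure (by simp)
    · exact (f.integrable _).smul_measure (by simp)
  rw [hb]
  have hi2 : ∀ n, Integrable (fun x : ℝ => x ^ 2) (μ n) := fun n => by
    have := hprob n
    by_contra h
    have := hvar n
    rw [integral_undef h] at this
    norm_num at this
  have hi1 : ∀ n, Integrable (fun x : ℝ => x) (μ n) := fun n => by
    have := hprob n
    refine Integrable.mono' ((integrable_const (1 : ℝ)).add (hi2 n)) (by fun_prop) ?_
    refine Eventually.of_forall fun x => ?_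
    simp only [Pi.add_apply, Real.norm_eq_abs]
    nlinarith [sq_abs x, sq_nonneg (|x| - 1), abs_nonneg x]
  have hest : ∀ ε : ℝ, 0 < ε → ∃ C : ℝ, 0 ≤ C ∧ ∀ n,
      |∫ x, f x ∂(μ n) - (f (-1) + f 1) / 2| ≤ ε + C * (∫ x, x ^ 4 ∂(μ n) - 1) := by
    intro ε hε
    obtain ⟨C, hC, H⟩ := fmb_bound f ε hε
    refine ⟨C, hC, fun n => ?_⟩
    have := hprob n
    have iL : Integrable (fun x : ℝ => (f (-1) + f 1) / 2 + (f 1 - f (-1)) / 2 * x) (μ n) :=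
      (integrable_const _).add ((hi1 n).const_mul _)
    have e1 : ∫ x, (f x - ((f (-1) + f 1) / 2 + (f 1 - f (-1)) / 2 * x)) ∂(μ n)
        = ∫ x, f x ∂(μ n) - (f (-1) + f 1) / 2 := by
      rw [integral_sub (f.integrable _) iL, integral_add (integrable_const _)
        ((hi1 n).const_mul _), integral_const_mul, hmean n]
      simp
    have i4 : Integrable (fun x : ℝ => x ^ 4 - 2 * x ^ 2) (μ n) :=
      (hmom4 n).sub ((hi2 n).const_mul 2)
    have i5 : Integrable (fun x : ℝ => x ^ 4 - 2 * x ^ 2 + 1) (μ n) :=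
      i4.add (integrable_const _)
    have e2 : ∫ x, (ε + C * (x ^ 4 - 2 * x ^ 2 + 1)) ∂(μ n)
        = ε + C * (∫ x, x ^ 4 ∂(μ n) - 1) := by
      rw [integral_add (integrable_const _) (i5.const_mul _), integral_const_mul,
        integral_add i4 (integrable_const _), integral_sub (hmom4 n) ((hi2 n).const_mul 2),
        integral_const_mul, hvar n]
      simp; left; ring
    rw [← e1, ← e2, ← Real.norm_eq_abs]
    refine norm_integral_le_of_norm_le ((integrable_const _).add (i5.const_mul _)) ?_
    refine Eventually.of_forall fun x => ?_
    refine le_trans (le_of_eq ?_) (H x)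
    rw [Real.norm_eq_abs]
    congr 1; ring
  rw [Metric.tendsto_atTop']
  intro ε hε
  obtain ⟨C, hC, H⟩ := hest (ε / 2) (by positivity)
  have hlim : Tendsto (fun n => ε / 2 + C * (∫ x, x ^ 4 ∂(μ n) - 1)) atTop
      (𝓝 (ε / 2 + C * (1 - 1))) :=
    ((h4.sub_const 1).const_mul C).const_add _
  have hev := hlim.eventually_lt_const (u := ε) (by linarith)
  obtain ⟨N, hN⟩ := eventually_atTop.1 hev
  exact ⟨N, fun n hn => (H n).trans_lt (hN n hn.le)⟩
end

section
/- Let (μ_n)_{n≥1} be a sequence of Borel probability measures on ℝ with finite fourth moments such that ∫ x^i dμ_n → 1/2 as n → ∞ for each i = 1, 2, 3, 4. Then μ_n converges weakly to the measure (1/2)δ_{0} + (1/2)δ_{1}. -/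
open MeasureTheory Filter Topology BoundedContinuousFunction

/-- The two-point measure (1/2)δ₀ + (1/2)δ₁. -/
noncomputable def halfZeroHalfOne : Measure ℝ :=
  (1 / 2 : ENNReal) • Measure.dirac (0 : ℝ) + (1 / 2 : ENNReal) • Measure.dirac (1 : ℝ)

theorem aux_bound (f : ℝ →ᵇ ℝ) (ε : ℝ) (hε : 0 < ε) : ∃ K : ℝ, 0 ≤ K ∧ ∀ x : ℝ,
    |f x - f 0 - (f 1 - f 0) * x| ≤ ε + K * (x ^ 4 - 2 * x ^ 3 + x ^ 2) := by
  have hc : Continuous (fun x : ℝ => f x - f 0 - (f 1 - f 0) * x) := by fun_prop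
  obtain ⟨d0, hd0, h0⟩ := Metric.continuous_iff.1 hc 0 ε hε
  obtain ⟨d1, hd1, h1⟩ := Metric.continuous_iff.1 hc 1 ε hε
  simp only [Real.dist_eq] at h0 h1
  set d := min d0 d1 with hd
  have hdp : 0 < d := lt_min hd0 hd1
  have hM : 0 ≤ ‖f‖ := norm_nonneg f
  refine ⟨2 * ‖f‖ * (2 / d ^ 4 + 1 / d ^ 2), by positivity, fun x => ?_⟩
  have hq : x ^ 4 - 2 * x ^ 3 + x ^ 2 = x ^ 2 * (x - 1) ^ 2 := by ring
  rw [hq]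
  have hKq : 0 ≤ 2 * ‖f‖ * (2 / d ^ 4 + 1 / d ^ 2) * (x ^ 2 * (x - 1) ^ 2) := by positivity
  by_cases hx0 : |x| < d
  · have := h0 x (by simpa using hx0.trans_le (min_le_left _ _))
    simp only [mul_zero, sub_self, sub_zero] at this
    linarith
  by_cases hx1 : |x - 1| < d
  · have := h1 x (hx1.trans_le (min_le_right _ _))
    simp only [mul_one, sub_self, sub_zero] at this
    linarith
  push Not at hx0 hx1
  have e0 : d ^ 2 ≤ x ^ 2 := by
    rw [← sq_abs x]; gcongr
  have e1 : d ^ 2 ≤ (x - 1) ^ 2 := by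
    rw [← sq_abs (x - 1)]; gcongr
  have q1 : 1 ≤ 1 / d ^ 4 * (x ^ 2 * (x - 1) ^ 2) := by
    rw [one_div_mul_eq_div, le_div_iff₀ (by positivity)]
    calc 1 * d ^ 4 = d ^ 2 * d ^ 2 := by ring
      _ ≤ _ := by gcongr
  have q2 : x ^ 2 ≤ 1 / d ^ 2 * (x ^ 2 * (x - 1) ^ 2) := by
    rw [one_div_mul_eq_div, le_div_iff₀ (by positivity)]
    gcongr
  have q3 : 1 + |x| ≤ (2 / d ^ 4 + 1 / d ^ 2) * (x ^ 2 * (x - 1) ^ 2) := by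
    have : (2 / d ^ 4 + 1 / d ^ 2) * (x ^ 2 * (x - 1) ^ 2) =
      2 * (1 / d ^ 4 * (x ^ 2 * (x - 1) ^ 2)) + 1 / d ^ 2 * (x ^ 2 * (x - 1) ^ 2) := by ring
    rw [this]
    nlinarith [sq_nonneg (|x| - 1), sq_abs x]
  have b (u v : ℝ) : |f u - f v| ≤ 2 * ‖f‖ := by
    have := f.dist_le_two_norm u v
    rwa [Real.dist_eq] at this
  calc |f x - f 0 - (f 1 - f 0) * x| ≤ |f x - f 0| + |(f 1 - f 0) * x| := abs_sub _ _
    _ ≤ 2 * ‖f‖ + 2 * ‖f‖ * |x| := by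
      rw [abs_mul]
      gcongr
      · exact b _ _
      · exact b _ _
    _ = 2 * ‖f‖ * (1 + |x|) := by ring
    _ ≤ 2 * ‖f‖ * ((2 / d ^ 4 + 1 / d ^ 2) * (x ^ 2 * (x - 1) ^ 2)) := by gcongr
    _ ≤ _ := by linarith

theorem moments_to_half_implies_zero_one_bernoulli
    (μ : ℕ → Measure ℝ)
    (hprob : ∀ n, IsProbabilityMeasure (μ n))
    (hmom4 : ∀ n, Integrable (fun x => x ^ 4) (μ n))
    (hmom : ∀ i : ℕ, 1 ≤ i → i ≤ 4 →
      Tendsto (fun n => ∫ x, x ^ i ∂(μ n)) atTop (𝓝 (1 / 2))) :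
    WeakConv μ halfZeroHalfOne := by
  intro f
  have hint : ∀ n, ∀ i : ℕ, i ≤ 4 → Integrable (fun x : ℝ => x ^ i) (μ n) := by
    intro n i hi
    have := hprob n
    refine Integrable.mono' ((integrable_const (1 : ℝ)).add (hmom4 n)) (by fun_prop)
      (Eventually.of_forall fun x => ?_)
    simp only [Pi.add_apply, Real.norm_eq_abs, abs_pow]
    have h4 : x ^ 4 = |x| ^ 4 := by rw [← abs_pow, abs_of_nonneg (by positivity)]
    rw [h4]
    rcases le_total |x| 1 with h | h
    · have := pow_le_one₀ (n := i) (abs_nonneg x) h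
      have : 0 ≤ |x| ^ 4 := by positivity
      linarith
    · have := pow_le_pow_right₀ h hi
      linarith
  have hf : ∀ n, Integrable (fun x => f x) (μ n) := fun n => by
    have := hprob n
    exact f.integrable (μ n)
  have hi1 : ∀ n, Integrable (fun x : ℝ => x) (μ n) := fun n => by
    simpa using hint n 1 (by norm_num)
  have hm1 : Tendsto (fun n => ∫ x, x ∂(μ n)) atTop (𝓝 (1 / 2)) := by
    simpa using hmom 1 le_rfl (by norm_num)
  have hiq : ∀ n, Integrable (fun x : ℝ => x ^ 4 - 2 * x ^ 3 + x ^ 2) (μ n) := fun n =>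
    ((hint n 4 le_rfl).sub ((hint n 3 (by norm_num)).const_mul 2)).add (hint n 2 (by norm_num))
  have hmq : Tendsto (fun n => ∫ x, (x ^ 4 - 2 * x ^ 3 + x ^ 2) ∂(μ n)) atTop (𝓝 0) := by
    have h := ((hmom 4 (by norm_num) le_rfl).sub ((hmom 3 (by norm_num) (by norm_num)).const_mul 2)).add
      (hmom 2 (by norm_num) (by norm_num))
    norm_num at h
    refine h.congr fun n => ?_
    have hs : Integrable (fun x : ℝ => x ^ 4 - 2 * x ^ 3) (μ n) :=
      (hint n 4 le_rfl).sub ((hint n 3 (by norm_num)).const_mul 2)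
    rw [integral_add hs
      (hint n 2 (by norm_num)),
      integral_sub (hint n 4 le_rfl) ((hint n 3 (by norm_num)).const_mul 2),
      integral_const_mul]
  have hg : Tendsto (fun n => ∫ x, (f x - f 0 - (f 1 - f 0) * x) ∂(μ n)) atTop (𝓝 0) := by
    rw [Metric.tendsto_atTop']
    intro ε hε
    obtain ⟨K, hK, hb⟩ := aux_bound f (ε / 2) (by positivity)
    have h2 : Tendsto (fun n => K * ∫ x, (x ^ 4 - 2 * x ^ 3 + x ^ 2) ∂(μ n)) atTop (𝓝 0) := by
      simpa using hmq.const_mul K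
    obtain ⟨N, hN⟩ := eventually_atTop.1 (h2.eventually (gt_mem_nhds (half_pos hε)))
    refine ⟨N, fun n hn => ?_⟩
    have := hprob n
    have h3 := norm_integral_le_of_norm_le
      (f := fun x => f x - f 0 - (f 1 - f 0) * x) ((integrable_const (ε / 2)).add ((hiq n).const_mul K))
      (Eventually.of_forall hb)
    simp only [Pi.add_apply] at h3
    rw [integral_add (integrable_const _) ((hiq n).const_mul K), integral_const_mul] at h3
    simp only [integral_const, probReal_univ, one_smul] at h3
    rw [dist_zero_right]
    have := hN n hn.le
    linarith
  have hlim : ∫ x, f x ∂halfZeroHalfOne = 0 + (f 0 + (f 1 - f 0) * (1 / 2)) := by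
    unfold halfZeroHalfOne
    rw [integral_add_measure ((integrable_dirac (by simp)).smul_measure (by simp))
      ((integrable_dirac (by simp)).smul_measure (by simp))]
    simp [integral_smul_measure]
    ring
  rw [hlim]
  refine (hg.add ((hm1.const_mul (f 1 - f 0)).const_add (f 0))).congr fun n => ?_
  have := hprob n
  have hs : Integrable (fun x => f x - f 0) (μ n) := (hf n).sub (integrable_const _)
  rw [integral_sub hs ((hi1 n).const_mul _),
    integral_sub (hf n) (integrable_const _), integral_const_mul]
  simp
end

section
/- Let (μ_n)_{n≥1} be a sequence of Borel probability measures on ℝ, each infinitely divisible with respect to classical convolution and each having finite fourth moment. Write m_i(n) = ∫ x^i dμ_n, and define the first four classical cumulants of μ_n by κ₁(n) = m₁(n), κ₂(n) = m₂(n) − m₁(n)², κ₃(n) = m₃(n) − 3 m₁(n) m₂(n) + 2 m₁(n)³, κ₄(n) = m₄(n) − 4 m₁(n) m₃(n) − 3 m₂(n)² + 12 m₁(n)² m₂(n) − 6 m₁(n)⁴. If κ_i(n) → 1 as n → ∞ for i = 1, 2, 3, 4, then μ_n converges weakly to the Poisson distribution with parameter 1, i.e., the measure Σ_{j=0}^∞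 (e^{−1}/j!) δ_j on ℝ. -/
open MeasureTheory Filter Topology BoundedContinuousFunction

/-- The Poisson distribution with parameter 1, as a Borel measure on ℝ:
∑_{j=0}^∞ (e^{-1}/j!) δ_j. -/
noncomputable def poissonOne : Measure ℝ :=
  Measure.sum (fun j : ℕ =>
    ENNReal.ofReal (Real.exp (-1) / (Nat.factorial j)) • Measure.dirac (j : ℝ))

lemma exp_bound_aux (y : ℝ) : ‖Complex.exp (y * Complex.I) - 1 - y * Complex.I‖ ≤ 3 * y ^ 2 := by
  have hn : ‖(y : ℂ) * Complex.I‖ = |y| := by simp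
  by_cases h : |y| ≤ 1
  · have := Complex.norm_exp_sub_one_sub_id_le (x := y * Complex.I) (by rw [hn]; exact h)
    rw [hn, sq_abs] at this
    nlinarith [sq_nonneg y]
  · push Not at h
    have h1 : ‖Complex.exp (y * Complex.I)‖ = 1 := Complex.norm_exp_ofReal_mul_I y
    have h2 := norm_sub_le (Complex.exp (y * Complex.I) - 1) (y * Complex.I)
    have h3 := norm_sub_le (Complex.exp (y * Complex.I)) 1
    rw [h1, norm_one] at h3
    rw [hn] at h2
    nlinarith [sq_abs y]

lemma h_bound (t : ℝ) : ∃ b c : ℂ, ∃ C : ℝ,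
    t * Complex.I + b + c = Complex.exp (t * Complex.I) - 1 ∧
    ∀ x : ℝ, ‖Complex.exp (t * x * Complex.I) - 1 - t * Complex.I * x - b * x ^ 2 - c * x ^ 3‖
      ≤ C * (x ^ 2 * (x - 1) ^ 2) := by
  set E := Complex.exp (t * Complex.I) with hE
  have hEn : ‖E‖ = 1 := Complex.norm_exp_ofReal_mul_I t
  set P := E - 1 - t * Complex.I with hP
  set Q := t * Complex.I * (E - 1) with hQ
  obtain ⟨b, hb⟩ : ∃ b, b = 3 * P - Q := ⟨_, rfl⟩
  obtain ⟨c, hc⟩ : ∃ c, c = Q - 2 * P := ⟨_, rfl⟩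
  set A := 3 * t ^ 2 + ‖b‖ + 2 * ‖c‖ with hA
  have hA0 : 0 ≤ A := by positivity
  refine ⟨b, c, 10 * A, by rw [hb, hc, hP]; ring, fun x => ?_⟩
  set H := Complex.exp (t * x * Complex.I) - 1 - t * Complex.I * x - b * x ^ 2 - c * x ^ 3 with hH
  have hnb := norm_nonneg b
  have hnc := norm_nonneg c
  have hx0 := abs_nonneg x
  have b1 : ‖H‖ ≤ A * (x ^ 2 * (1 + |x|)) := by
    have e : H = (Complex.exp ((t * x : ℝ) * Complex.I) - 1 - (t * x : ℝ) * Complex.I)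
        - x ^ 2 * (b + c * x) := by
      rw [hH]; push_cast; ring
    have e1 := exp_bound_aux (t * x)
    have e2 : ‖(x : ℂ) ^ 2 * (b + c * x)‖ ≤ x ^ 2 * (‖b‖ + ‖c‖ * |x|) := by
      rw [norm_mul, norm_pow, Complex.norm_real, Real.norm_eq_abs, sq_abs]
      gcongr
      refine (norm_add_le _ _).trans ?_
      rw [norm_mul, Complex.norm_real, Real.norm_eq_abs]
    have e3 : ‖H‖ ≤ 3 * (t * x) ^ 2 + x ^ 2 * (‖b‖ + ‖c‖ * |x|) := by
      rw [e]; exact (norm_sub_le _ _).trans (add_le_add e1 e2)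
    refine e3.trans ?_
    have : 3 * (t * x) ^ 2 + x ^ 2 * (‖b‖ + ‖c‖ * |x|) = x ^ 2 * (3 * t ^ 2 + ‖b‖ + ‖c‖ * |x|) := by
      ring
    rw [this, mul_left_comm]
    gcongr
    rw [hA]
    have := mul_nonneg (sq_nonneg t) hx0
    nlinarith [mul_nonneg hnb hx0, mul_nonneg hnc hx0]
  have b2 : ‖H‖ ≤ A * ((x - 1) ^ 2 * (1 + |x|)) := by
    have e0 : Complex.exp (t * x * Complex.I)
        = E * Complex.exp ((t * (x - 1) : ℝ) * Complex.I) := by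
      rw [hE, ← Complex.exp_add]; congr 1; push_cast; ring
    have e : H = E * (Complex.exp ((t * (x - 1) : ℝ) * Complex.I) - 1
          - (t * (x - 1) : ℝ) * Complex.I)
        - ((x - 1 : ℝ) : ℂ) ^ 2 * (b + 2 * c + c * x) := by
      rw [hH, e0, hb, hc, hP, hQ]; push_cast; ring
    have e1 := exp_bound_aux (t * (x - 1))
    have e2 : ‖((x - 1 : ℝ) : ℂ) ^ 2 * (b + 2 * c + c * x)‖
        ≤ (x - 1) ^ 2 * (‖b‖ + 2 * ‖c‖ + ‖c‖ * |x|) := by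
      rw [norm_mul, norm_pow, Complex.norm_real, Real.norm_eq_abs, sq_abs]
      gcongr
      refine (norm_add₃_le).trans ?_
      rw [norm_mul, norm_mul, Complex.norm_real, Real.norm_eq_abs]
      simp
    have e3 : ‖H‖ ≤ 3 * (t * (x - 1)) ^ 2 + (x - 1) ^ 2 * (‖b‖ + 2 * ‖c‖ + ‖c‖ * |x|) := by
      rw [e]; refine (norm_sub_le _ _).trans (add_le_add ?_ e2)
      rw [norm_mul, hEn, one_mul]; exact e1
    refine e3.trans ?_
    have : 3 * (t * (x - 1)) ^ 2 + (x - 1) ^ 2 * (‖b‖ + 2 * ‖c‖ + ‖c‖ * |x|)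
        = (x - 1) ^ 2 * (3 * t ^ 2 + ‖b‖ + 2 * ‖c‖ + ‖c‖ * |x|) := by
      ring
    rw [this, mul_left_comm]
    gcongr
    rw [hA]
    have := mul_nonneg (sq_nonneg t) hx0
    nlinarith [mul_nonneg hnb hx0, mul_nonneg hnc hx0]
  by_cases hx : |x - 1| ≤ 1 / 2
  · refine b2.trans ?_
    rw [abs_le] at hx
    have hk : 1 + |x| ≤ 10 * x ^ 2 := by
      rw [abs_of_nonneg (by linarith)]; nlinarith
    calc A * ((x - 1) ^ 2 * (1 + |x|)) ≤ A * ((x - 1) ^ 2 * (10 * x ^ 2)) := by gcongr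
      _ = _ := by ring
  · refine b1.trans ?_
    have hk : 1 + |x| ≤ 10 * (x - 1) ^ 2 := by
      push Not at hx
      rcases lt_abs.1 hx with h | h <;> rcases abs_cases x with ⟨h', _⟩ | ⟨h', _⟩ <;> rw [h'] <;>
        nlinarith
    calc A * (x ^ 2 * (1 + |x|)) ≤ A * (x ^ 2 * (10 * (x - 1) ^ 2)) := by gcongr
      _ = _ := by ring

lemma integrable_pow_of_four {μ : Measure ℝ} [IsProbabilityMeasure μ]
    (h : Integrable (fun x : ℝ => x ^ 4) μ) (k : ℕ) (hk : k ≤ 4) :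
    Integrable (fun x : ℝ => x ^ k) μ := by
  refine Integrable.mono' ((integrable_const (1 : ℝ)).add h) (by fun_prop) (ae_of_all _ fun x => ?_)
  simp only [Pi.add_apply, norm_pow, Real.norm_eq_abs]
  have h4 : x ^ 4 = |x| ^ 4 := by rw [← abs_pow, abs_of_nonneg (by positivity)]
  rw [h4]
  rcases le_total |x| 1 with h1 | h1
  · have := pow_le_one₀ (n := k) (abs_nonneg x) h1
    have : 0 ≤ |x| ^ 4 := by positivity
    linarith
  · have := pow_le_pow_right₀ h1 hk
    linarith

lemma integrable_right_of_conv {μ ν : Measure ℝ} [IsProbabilityMeasure μ] [IsProbabilityMeasure ν]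
    (h : Integrable (fun x : ℝ => x ^ 4) (classicalConv μ ν)) :
    Integrable (fun x : ℝ => x ^ 4) ν := by
  unfold classicalConv at h
  rw [integrable_map_measure (by fun_prop) (by fun_prop)] at h
  obtain ⟨x, hx⟩ := h.prod_right_ae.exists
  simp only [Function.comp] at hx
  refine Integrable.mono' ((hx.add (integrable_const (x ^ 4))).const_mul 8) (by fun_prop)
    (ae_of_all _ fun y => ?_)
  simp only [Pi.add_apply, norm_pow, Real.norm_eq_abs]
  have h4 : |y| ^ 4 = y ^ 4 := by rw [← abs_pow, abs_of_nonneg (by positivity)]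
  rw [h4]
  have h1 : y ^ 2 ≤ 2 * ((x + y) ^ 2 + x ^ 2) := by nlinarith [sq_nonneg (y + 2 * x)]
  have h2 : y ^ 4 ≤ (2 * ((x + y) ^ 2 + x ^ 2)) ^ 2 := by
    have := pow_le_pow_left₀ (sq_nonneg y) h1 2
    nlinarith
  nlinarith [sq_nonneg ((x + y) ^ 2 - x ^ 2)]

lemma conv_moments_s3 {μ ν : Measure ℝ} [IsProbabilityMeasure μ] [IsProbabilityMeasure ν]
    (h : Integrable (fun x : ℝ => x ^ 4) μ) (h' : Integrable (fun x : ℝ => x ^ 4) ν) :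
    Integrable (fun x : ℝ => x ^ 4) (classicalConv μ ν) ∧
    ∫ x, x ∂(classicalConv μ ν) = ∫ x, x ∂μ + ∫ x, x ∂ν ∧
    ∫ x, x ^ 2 ∂(classicalConv μ ν) = ∫ x, x ^ 2 ∂μ + 2 * (∫ x, x ∂μ) * (∫ x, x ∂ν)
      + ∫ x, x ^ 2 ∂ν ∧
    ∫ x, x ^ 3 ∂(classicalConv μ ν) = ∫ x, x ^ 3 ∂μ + 3 * (∫ x, x ^ 2 ∂μ) * (∫ x, x ∂ν)
      + 3 * (∫ x, x ∂μ) * (∫ x, x ^ 2 ∂ν) + ∫ x, x ^ 3 ∂ν ∧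
    ∫ x, x ^ 4 ∂(classicalConv μ ν) = ∫ x, x ^ 4 ∂μ + 4 * (∫ x, x ^ 3 ∂μ) * (∫ x, x ∂ν)
      + 6 * (∫ x, x ^ 2 ∂μ) * (∫ x, x ^ 2 ∂ν)
      + 4 * (∫ x, x ∂μ) * (∫ x, x ^ 3 ∂ν) + ∫ x, x ^ 4 ∂ν := by
  have I : ∀ i j : ℕ, i ≤ 4 → j ≤ 4 →
      Integrable (fun p : ℝ × ℝ => p.1 ^ i * p.2 ^ j) (μ.prod ν) := fun i j hi hj =>
    (integrable_pow_of_four h i hi).mul_prod (integrable_pow_of_four h' j hj)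
  have J : ∀ i j : ℕ, ∫ p : ℝ × ℝ, p.1 ^ i * p.2 ^ j ∂(μ.prod ν)
      = (∫ x, x ^ i ∂μ) * ∫ x, x ^ j ∂ν := fun i j =>
    integral_prod_mul (fun x : ℝ => x ^ i) (fun x : ℝ => x ^ j)
  have e : ∀ k : ℕ, ∀ p : ℝ × ℝ, (p.1 + p.2) ^ k
      = ∑ i ∈ Finset.range (k + 1), (p.1 ^ i * p.2 ^ (k - i)) * (k.choose i : ℝ) :=
    fun k p => add_pow _ _ _
  have M : ∀ k ≤ 4, ∫ x, x ^ k ∂(classicalConv μ ν) = ∑ i ∈ Finset.range (k + 1),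
      ((∫ x, x ^ i ∂μ) * ∫ x, x ^ (k - i) ∂ν) * (k.choose i : ℝ) := by
    intro k hk
    unfold classicalConv
    rw [integral_map (by fun_prop) (by fun_prop)]
    simp_rw [e k]
    rw [integral_finsetSum]
    · simp_rw [integral_mul_const, J]
    · intro i hi
      rw [Finset.mem_range] at hi
      exact (I i (k - i) (by omega) (by omega)).mul_const _
  refine ⟨?_, ?_, ?_, ?_, ?_⟩
  · unfold classicalConv
    rw [integrable_map_measure (by fun_prop) (by fun_prop)]
    simp only [Function.comp_def, e 4]
    refine integrable_finsetSum _ fun i hi => ?_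
    rw [Finset.mem_range] at hi
    exact (I i (4 - i) (by omega) (by omega)).mul_const _
  · have := M 1 (by norm_num)
    simp [Finset.sum_range_succ, Nat.choose] at this
    rw [this]; ring
  · have := M 2 (by norm_num)
    simp [Finset.sum_range_succ, Nat.choose] at this
    rw [this]; ring
  · have := M 3 (by norm_num)
    simp [Finset.sum_range_succ, Nat.choose] at this
    rw [this]; ring
  · have := M 4 (by norm_num)
    simp [Finset.sum_range_succ, Nat.choose] at this
    rw [this]; ring

instance convPow_prob_s3 {ν : Measure ℝ} [IsProbabilityMeasure ν] (m : ℕ) :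
    IsProbabilityMeasure (convPow ν m) := by
  induction m with
  | zero => unfold convPow; infer_instance
  | succ k ih =>
    unfold convPow classicalConv
    exact Measure.isProbabilityMeasure_map (by fun_prop)

lemma convPow_charFun {ν : Measure ℝ} [IsProbabilityMeasure ν] (m : ℕ) (t : ℝ) :
    charFun (convPow ν m) t = charFun ν t ^ m := by
  induction m with
  | zero => simp [convPow]
  | succ k ih =>
    have : convPow ν (k + 1) = (convPow ν k).conv ν := rfl
    rw [this, charFun_conv, ih, pow_succ]

lemma convPow_cumulants {ν : Measure ℝ} [IsProbabilityMeasure ν]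
    (h : Integrable (fun x : ℝ => x ^ 4) ν) (m : ℕ) :
    Integrable (fun x : ℝ => x ^ 4) (convPow ν m) ∧
    ∫ x, x ∂(convPow ν m) = m * ∫ x, x ∂ν ∧
    (∫ x, x ^ 2 ∂(convPow ν m)) - (∫ x, x ∂(convPow ν m)) ^ 2
      = m * ((∫ x, x ^ 2 ∂ν) - (∫ x, x ∂ν) ^ 2) ∧
    (∫ x, x ^ 3 ∂(convPow ν m)) - 3 * (∫ x, x ∂(convPow ν m)) * (∫ x, x ^ 2 ∂(convPow ν m))
        + 2 * (∫ x, x ∂(convPow ν m)) ^ 3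
      = m * ((∫ x, x ^ 3 ∂ν) - 3 * (∫ x, x ∂ν) * (∫ x, x ^ 2 ∂ν) + 2 * (∫ x, x ∂ν) ^ 3) ∧
    (∫ x, x ^ 4 ∂(convPow ν m)) - 4 * (∫ x, x ∂(convPow ν m)) * (∫ x, x ^ 3 ∂(convPow ν m))
        - 3 * (∫ x, x ^ 2 ∂(convPow ν m)) ^ 2
        + 12 * (∫ x, x ∂(convPow ν m)) ^ 2 * (∫ x, x ^ 2 ∂(convPow ν m))
        - 6 * (∫ x, x ∂(convPow ν m)) ^ 4
      = m * ((∫ x, x ^ 4 ∂ν) - 4 * (∫ x, x ∂ν) * (∫ x, x ^ 3 ∂ν)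
        - 3 * (∫ x, x ^ 2 ∂ν) ^ 2 + 12 * (∫ x, x ∂ν) ^ 2 * (∫ x, x ^ 2 ∂ν)
        - 6 * (∫ x, x ∂ν) ^ 4) := by
  induction m with
  | zero => simp [convPow, integrable_dirac]
  | succ k ih =>
    obtain ⟨i0, i1, i2, i3, i4⟩ := ih
    have : convPow ν (k + 1) = classicalConv (convPow ν k) ν := rfl
    rw [this]
    obtain ⟨c0, c1, c2, c3, c4⟩ := conv_moments_s3 i0 h
    rw [c1, c2, c3, c4]
    refine ⟨c0, ?_, ?_, ?_, ?_⟩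
    · rw [i1]; push_cast; ring
    · push_cast; linear_combination i2
    · push_cast; linear_combination i3
    · push_cast; linear_combination i4

lemma limits_aux (a1 a2 a3 a4 : ℕ → ℝ)
    (h1 : Tendsto (fun n : ℕ => n * a1 n) atTop (𝓝 1))
    (h2 : Tendsto (fun n : ℕ => n * (a2 n - a1 n ^ 2)) atTop (𝓝 1))
    (h3 : Tendsto (fun n : ℕ => n * (a3 n - 3 * a1 n * a2 n + 2 * a1 n ^ 3)) atTop (𝓝 1))
    (h4 : Tendsto (fun n : ℕ => n * (a4 n - 4 * a1 n * a3 n - 3 * a2 n ^ 2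
      + 12 * a1 n ^ 2 * a2 n - 6 * a1 n ^ 4)) atTop (𝓝 1)) :
    Tendsto (fun n : ℕ => n * a2 n) atTop (𝓝 1) ∧
    Tendsto (fun n : ℕ => n * a3 n) atTop (𝓝 1) ∧
    Tendsto (fun n : ℕ => n * a4 n) atTop (𝓝 1) := by
  have key : ∀ a : ℕ → ℝ, Tendsto (fun n : ℕ => n * a n) atTop (𝓝 1) → Tendsto a atTop (𝓝 0) := by
    intro a ha
    have := ha.mul (tendsto_inv_atTop_nhds_zero_nat (𝕜 := ℝ))
    rw [mul_zero] at this
    refine this.congr' ?_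
    filter_upwards [eventually_ge_atTop 1] with n hn
    have : (n : ℝ) ≠ 0 := by positivity
    field_simp
  have z1 := key a1 h1
  have g2 : Tendsto (fun n : ℕ => n * a2 n) atTop (𝓝 1) := by
    have := h2.add (h1.mul z1)
    simp only [mul_zero, add_zero] at this
    exact this.congr fun n => by ring
  have z2 := key a2 g2
  have g3 : Tendsto (fun n : ℕ => n * a3 n) atTop (𝓝 1) := by
    have := h3.add (h1.mul ((z2.const_mul 3).sub ((z1.pow 2).const_mul 2)))
    norm_num at this
    exact this.congr fun n => by ring
  have z3 := key a3 g3
  have g4 : Tendsto (fun n : ℕ => n * a4 n) atTop (𝓝 1) := by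
    have := (h4.add (h1.mul (((z3.const_mul 4).sub ((z1.mul z2).const_mul 12)).add
      ((z1.pow 3).const_mul 6)))).add (g2.mul (z2.const_mul 3))
    norm_num at this
    exact this.congr fun n => by ring
  exact ⟨g2, g3, g4⟩

lemma charFun_limit (ν : ℕ → Measure ℝ) (hp : ∀ n, IsProbabilityMeasure (ν n))
    (hi : ∀ n, Integrable (fun x : ℝ => x ^ 4) (ν n))
    (h1 : Tendsto (fun n : ℕ => n * ∫ x, x ∂(ν n)) atTop (𝓝 1))
    (h2 : Tendsto (fun n : ℕ => n * ∫ x, x ^ 2 ∂(ν n)) atTop (𝓝 1))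
    (h3 : Tendsto (fun n : ℕ => n * ∫ x, x ^ 3 ∂(ν n)) atTop (𝓝 1))
    (h4 : Tendsto (fun n : ℕ => n * ∫ x, x ^ 4 ∂(ν n)) atTop (𝓝 1)) (t : ℝ) :
    Tendsto (fun n : ℕ => charFun (ν n) t ^ n) atTop
      (𝓝 (Complex.exp (Complex.exp (t * Complex.I) - 1))) := by
  obtain ⟨b, c, C, hbc, hC⟩ := h_bound t
  set H : ℝ → ℂ := fun x =>
    Complex.exp (t * x * Complex.I) - 1 - t * Complex.I * x - b * x ^ 2 - c * x ^ 3 with hH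
  have J1 : ∀ n, Integrable (fun x : ℝ => x) (ν n) := fun n => by
    simpa using integrable_pow_of_four (hi n) 1 (by norm_num)
  have J2 : ∀ n, Integrable (fun x : ℝ => x ^ 2) (ν n) := fun n =>
    integrable_pow_of_four (hi n) 2 (by norm_num)
  have J3 : ∀ n, Integrable (fun x : ℝ => x ^ 3) (ν n) := fun n =>
    integrable_pow_of_four (hi n) 3 (by norm_num)
  have K1 : ∀ n, Integrable (fun x : ℝ => (x : ℂ)) (ν n) := fun n => (J1 n).ofReal
  have K2 : ∀ n, Integrable (fun x : ℝ => (x : ℂ) ^ 2) (ν n) := fun n => by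
    simpa using (J2 n).ofReal (𝕜 := ℂ)
  have K3 : ∀ n, Integrable (fun x : ℝ => (x : ℂ) ^ 3) (ν n) := fun n => by
    simpa using (J3 n).ofReal (𝕜 := ℂ)
  have Q : ∀ n, Integrable (fun x : ℝ => x ^ 2 * (x - 1) ^ 2) (ν n) := fun n => by
    refine (((hi n).sub ((J3 n).const_mul 2)).add (J2 n)).congr (ae_of_all _ fun x => ?_)
    simp only [Pi.add_apply, Pi.sub_apply]; ring
  have Qe : ∀ n, ∫ x, x ^ 2 * (x - 1) ^ 2 ∂(ν n)
      = ∫ x, x ^ 4 ∂(ν n) - 2 * ∫ x, x ^ 3 ∂(ν n) + ∫ x, x ^ 2 ∂(ν n) := fun n => by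
    have S : Integrable (fun x : ℝ => x ^ 4 - 2 * x ^ 3) (ν n) := (hi n).sub ((J3 n).const_mul 2)
    rw [← integral_const_mul, ← integral_sub (hi n) ((J3 n).const_mul 2), ← integral_add S (J2 n)]
    congr 1; ext x; ring
  have KH : ∀ n, Integrable H (ν n) := fun n =>
    Integrable.mono' ((Q n).const_mul C) (by rw [hH]; fun_prop) (ae_of_all _ hC)
  have ce : ∀ n, charFun (ν n) t = 1 + (∫ x, H x ∂(ν n) + t * Complex.I * (∫ x, x ∂(ν n) : ℝ)
      + b * (∫ x, x ^ 2 ∂(ν n) : ℝ) + c * (∫ x, x ^ 3 ∂(ν n) : ℝ)) := fun n => by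
    have r1 : ((∫ x, x ∂(ν n) : ℝ) : ℂ) = ∫ x, (x : ℂ) ∂(ν n) := integral_ofReal.symm
    have r2 : ((∫ x, x ^ 2 ∂(ν n) : ℝ) : ℂ) = ∫ x, (x : ℂ) ^ 2 ∂(ν n) := by
      rw [← integral_complex_ofReal]; simp
    have r3 : ((∫ x, x ^ 3 ∂(ν n) : ℝ) : ℂ) = ∫ x, (x : ℂ) ^ 3 ∂(ν n) := by
      rw [← integral_complex_ofReal]; simp
    have r0 : (1 : ℂ) = ∫ x, (1 : ℂ) ∂(ν n) := by simp
    have S1 : Integrable (fun x : ℝ => H x + t * Complex.I * x) (ν n) :=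
      (KH n).add ((K1 n).const_mul _)
    have S2 : Integrable (fun x : ℝ => H x + t * Complex.I * x + b * x ^ 2) (ν n) :=
      S1.add ((K2 n).const_mul _)
    have S3 : Integrable (fun x : ℝ => H x + t * Complex.I * x + b * x ^ 2 + c * x ^ 3) (ν n) :=
      S2.add ((K3 n).const_mul _)
    rw [r1, r2, r3, r0, charFun_apply_real, ← integral_const_mul, ← integral_const_mul,
      ← integral_const_mul, ← integral_add (KH n) ((K1 n).const_mul _),
      ← integral_add S1 ((K2 n).const_mul _), ← integral_add S2 ((K3 n).const_mul _),
      ← integral_add (integrable_const _) S3]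
    congr 1; ext x
    simp only [hH]; ring
  have HL : Tendsto (fun n : ℕ => (n : ℂ) * ∫ x, H x ∂(ν n)) atTop (𝓝 0) := by
    have lim : Tendsto (fun n : ℕ => C * (n * ∫ x, x ^ 2 * (x - 1) ^ 2 ∂(ν n))) atTop (𝓝 0) := by
      have := ((h4.sub (h3.const_mul 2)).add h2).const_mul C
      norm_num at this
      refine this.congr fun n => ?_
      rw [Qe]; ring
    refine squeeze_zero_norm (fun n => ?_) lim
    rw [norm_mul, Complex.norm_natCast, mul_left_comm]
    gcongr
    rw [← integral_const_mul]
    exact norm_integral_le_of_norm_le ((Q n).const_mul C) (ae_of_all _ hC)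
  simp_rw [ce]
  refine Complex.tendsto_one_add_pow_exp_of_tendsto ?_
  have o1 := (Complex.continuous_ofReal.tendsto _).comp h1
  have o2 := (Complex.continuous_ofReal.tendsto _).comp h2
  have o3 := (Complex.continuous_ofReal.tendsto _).comp h3
  have := ((HL.add (o1.const_mul (t * Complex.I))).add (o2.const_mul b)).add (o3.const_mul c)
  rw [← hbc]
  simp only [Complex.ofReal_one, mul_one, zero_add] at this
  refine this.congr fun n => ?_
  simp only [Function.comp]
  push_cast
  ring

lemma poissonOne_eq : poissonOne
    = (ProbabilityTheory.poissonMeasure 1).map (Nat.cast : ℕ → ℝ) := by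
  unfold poissonOne ProbabilityTheory.poissonMeasure
  rw [Measure.map_sum (by fun_prop)]
  congr 1; ext1 j
  rw [Measure.map_smul, Measure.map_dirac' (by fun_prop)]
  simp

theorem cumulants_to_one_implies_poisson
    (μ : ℕ → Measure ℝ)
    (hprob : ∀ n, IsProbabilityMeasure (μ n))
    (hID : ∀ n, IsClassicallyInfDiv (μ n))
    (hmom4 : ∀ n, Integrable (fun x => x ^ 4) (μ n))
    (hκ1 : Tendsto (fun n => ∫ x, x ∂(μ n)) atTop (𝓝 1))
    (hκ2 : Tendsto (fun n =>
      (∫ x, x ^ 2 ∂(μ n)) - (∫ x, x ∂(μ n)) ^ 2) atTop (𝓝 1))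
    (hκ3 : Tendsto (fun n =>
      (∫ x, x ^ 3 ∂(μ n)) - 3 * (∫ x, x ∂(μ n)) * (∫ x, x ^ 2 ∂(μ n))
        + 2 * (∫ x, x ∂(μ n)) ^ 3) atTop (𝓝 1))
    (hκ4 : Tendsto (fun n =>
      (∫ x, x ^ 4 ∂(μ n)) - 4 * (∫ x, x ∂(μ n)) * (∫ x, x ^ 3 ∂(μ n))
        - 3 * (∫ x, x ^ 2 ∂(μ n)) ^ 2
        + 12 * (∫ x, x ∂(μ n)) ^ 2 * (∫ x, x ^ 2 ∂(μ n))
        - 6 * (∫ x, x ∂(μ n)) ^ 4) atTop (𝓝 1)) :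
    WeakConv μ poissonOne := by
  have hex : ∀ n, ∃ ν : Measure ℝ, IsProbabilityMeasure ν ∧ Integrable (fun x : ℝ => x ^ 4) ν ∧
      (1 ≤ n → μ n = convPow ν n) := by
    intro n
    rcases n with _ | k
    · exact ⟨Measure.dirac 0, inferInstance, by simp [integrable_dirac], by simp⟩
    · obtain ⟨ν, hν, he⟩ := hID (k + 1) (k + 1) (by omega)
      refine ⟨ν, hν, ?_, fun _ => he⟩
      have := hmom4 (k + 1)
      rw [he] at this
      exact integrable_right_of_conv this
  choose ν hν hi he using hex
  have h1 : Tendsto (fun n : ℕ => n * ∫ x, x ∂(ν n)) atTop (𝓝 1) := by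
    refine hκ1.congr' ?_
    filter_upwards [eventually_ge_atTop 1] with n hn
    rw [he n hn, (convPow_cumulants (hi n) n).2.1]
  obtain ⟨h2, h3, h4⟩ := limits_aux (fun n => ∫ x, x ∂(ν n)) (fun n => ∫ x, x ^ 2 ∂(ν n))
    (fun n => ∫ x, x ^ 3 ∂(ν n)) (fun n => ∫ x, x ^ 4 ∂(ν n)) h1
    (by
      refine hκ2.congr' ?_
      filter_upwards [eventually_ge_atTop 1] with n hn
      rw [he n hn, (convPow_cumulants (hi n) n).2.2.1])
    (by
      refine hκ3.congr' ?_
      filter_upwards [eventually_ge_atTop 1] with n hn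
      rw [he n hn, (convPow_cumulants (hi n) n).2.2.2.1])
    (by
      refine hκ4.congr' ?_
      filter_upwards [eventually_ge_atTop 1] with n hn
      rw [he n hn, (convPow_cumulants (hi n) n).2.2.2.2])
  have hpo : IsProbabilityMeasure poissonOne := by rw [poissonOne_eq]; infer_instance
  let P : ℕ → ProbabilityMeasure ℝ := fun n => ⟨μ n, hprob n⟩
  let P₀ : ProbabilityMeasure ℝ := ⟨poissonOne, hpo⟩
  have main : Tendsto P atTop (𝓝 P₀) := by
    refine ProbabilityMeasure.tendsto_of_tendsto_charFun fun t => ?_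
    have hc : charFun poissonOne t = Complex.exp (Complex.exp (t * Complex.I) - 1) := by
      rw [poissonOne_eq, ProbabilityTheory.charFun_map_cast_poissonMeasure]; simp
    change Tendsto (fun n => charFun (μ n) t) atTop (𝓝 (charFun poissonOne t))
    rw [hc]
    refine (charFun_limit ν hν hi h1 h2 h3 h4 t).congr' ?_
    filter_upwards [eventually_ge_atTop 1] with n hn
    rw [he n hn, convPow_charFun]
  intro f
  exact ProbabilityMeasure.tendsto_iff_forall_integral_tendsto.1 main f
end

section
/- Let (μ_n)_{n≥1} and μ be Borel probability measures on ℝ, and for a probability measure ν let G_ν(z) = ∫_ℝ 1/(z − x) dν(x) denote its Cauchy transform, defined for complex z with Im(z) > 0. Then μ_n converges weakly to μ if and only if for every z ∈ ℂ with Im(z) ≥ 1 one has G_{μ_n}(z) → G_μ(z) as n → ∞. -/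
open MeasureTheory Filter Topology BoundedContinuousFunction

/-- The Cauchy transform of a Borel measure ν on ℝ: G_ν(z) = ∫ (z - x)⁻¹ dν(x). -/
noncomputable def cauchyTransform (ν : Measure ℝ) (z : ℂ) : ℂ :=
  ∫ x, (z - (x : ℂ))⁻¹ ∂ν

lemma one_le_norm_sub (z : ℂ) (hz : 1 ≤ |z.im|) (x : ℝ) : 1 ≤ ‖z - (x : ℂ)‖ := by
  have := Complex.abs_im_le_norm (z - (x : ℂ))
  simp at this
  linarith

lemma sub_ne (z : ℂ) (hz : 1 ≤ |z.im|) (x : ℝ) : z - (x : ℂ) ≠ 0 := by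
  have := one_le_norm_sub z hz x
  intro h
  rw [h] at this
  norm_num at this

noncomputable def res (z : ℂ) (hz : 1 ≤ |z.im|) : ℝ →ᵇ ℂ :=
  BoundedContinuousFunction.ofNormedAddCommGroup (fun x : ℝ => (z - (x : ℂ))⁻¹)
    (Continuous.inv₀ (by fun_prop) (sub_ne z hz)) 1
    (fun x => by rw [norm_inv]; exact inv_le_one_of_one_le₀ (one_le_norm_sub z hz x))

@[simp] lemma res_apply (z : ℂ) (hz : 1 ≤ |z.im|) (x : ℝ) : res z hz x = (z - (x : ℂ))⁻¹ := rfl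

lemma norm_res_le (z : ℂ) (hz : 1 ≤ |z.im|) : ‖res z hz‖ ≤ 1 :=
  BoundedContinuousFunction.norm_ofNormedAddCommGroup_le _ zero_le_one _

lemma res_mul (z w : ℂ) (hz : 1 ≤ |z.im|) (hw : 1 ≤ |w.im|) :
    res z hz - res w hw = (w - z) • (res z hz * res w hw) := by
  ext x
  have h1 := sub_ne z hz x
  have h2 := sub_ne w hw x
  simp
  field_simp
  ring

def RS : Set (ℝ →ᵇ ℂ) := {g | ∃ z hz, g = res z hz}

noncomputable def SS : Submodule ℂ (ℝ →ᵇ ℂ) := (Submodule.span ℂ (insert 1 RS)).topologicalClosure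

lemma res_mem (z : ℂ) (hz : 1 ≤ |z.im|) : res z hz ∈ SS :=
  Submodule.le_topologicalClosure _ (Submodule.subset_span (Or.inr ⟨z, hz, rfl⟩))

lemma one_mem_SS : (1 : ℝ →ᵇ ℂ) ∈ SS :=
  Submodule.le_topologicalClosure _ (Submodule.subset_span (Or.inl rfl))

lemma isClosed_SS : IsClosed (SS : Set (ℝ →ᵇ ℂ)) := Submodule.isClosed_topologicalClosure _

lemma res_mul_mem_of_ne (z w : ℂ) (hz : 1 ≤ |z.im|) (hw : 1 ≤ |w.im|) (h : z ≠ w) :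
    res z hz * res w hw ∈ SS := by
  have h' : w - z ≠ 0 := sub_ne_zero.2 h.symm
  have : res z hz * res w hw = (w - z)⁻¹ • (res z hz - res w hw) := by
    rw [res_mul, smul_smul, inv_mul_cancel₀ h', one_smul]
  rw [this]
  exact SS.smul_mem _ (SS.sub_mem (res_mem _ _) (res_mem _ _))

lemma dist_res (z w : ℂ) (hz : 1 ≤ |z.im|) (hw : 1 ≤ |w.im|) :
    ‖res z hz - res w hw‖ ≤ ‖w - z‖ := by
  rw [res_mul, norm_smul]
  have := norm_mul_le (res z hz) (res w hw)
  have h1 := norm_res_le z hz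
  have h2 := norm_res_le w hw
  have : ‖res z hz * res w hw‖ ≤ 1 :=
    this.trans (mul_le_one₀ h1 (norm_nonneg _) h2)
  nlinarith [norm_nonneg (w - z)]

lemma res_mul_mem (z w : ℂ) (hz : 1 ≤ |z.im|) (hw : 1 ≤ |w.im|) :
    res z hz * res w hw ∈ SS := by
  by_cases h : z = w
  · subst h
    rw [← SetLike.mem_coe, ← isClosed_SS.closure_eq, Metric.mem_closure_iff]
    intro ε hε
    have hv : 1 ≤ |(z + ((ε / 2 : ℝ) : ℂ)).im| := by simpa using hz
    refine ⟨res z hz * res (z + ((ε / 2 : ℝ) : ℂ)) hv, res_mul_mem_of_ne _ _ _ _ ?_, ?_⟩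
    · intro h
      have h3 : ((ε / 2 : ℝ) : ℂ) = 0 := by linear_combination -h
      rw [Complex.ofReal_eq_zero] at h3
      linarith
    · rw [dist_eq_norm, ← mul_sub]
      have h1 := norm_mul_le (res z hz) (res z hz - res (z + ((ε / 2 : ℝ) : ℂ)) hv)
      have h2 := dist_res z (z + ((ε / 2 : ℝ) : ℂ)) hz hv
      have h3 := norm_res_le z hz
      rw [add_sub_cancel_left, Complex.norm_real, Real.norm_eq_abs,
        abs_of_pos (by positivity)] at h2
      have := norm_nonneg (res z hz - res (z + ((ε / 2 : ℝ) : ℂ)) hv)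
      nlinarith
  · exact res_mul_mem_of_ne z w hz hw h

noncomputable def TT : Subalgebra ℂ (ℝ →ᵇ ℂ) where
  carrier := {a | ∀ s ∈ SS, a * s ∈ SS}
  mul_mem' := fun {a b} ha hb s hs => by rw [mul_assoc]; exact ha _ (hb _ hs)
  add_mem' := fun {a b} ha hb s hs => by rw [add_mul]; exact SS.add_mem (ha _ hs) (hb _ hs)
  algebraMap_mem' := fun c s hs => by
    rw [← Algebra.smul_def]; exact SS.smul_mem _ hs

lemma RS_sub_TT : RS ⊆ TT := by
  rintro _ ⟨z, hz, rfl⟩ s hs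
  have : SS ≤ SS.comap (LinearMap.mulLeft ℂ (res z hz)) := by
    refine Submodule.topologicalClosure_minimal _ ?_ ?_
    · rw [Submodule.span_le]
      rintro _ (rfl | ⟨w, hw, rfl⟩)
      · simpa using res_mem z hz
      · exact res_mul_mem z w hz hw
    · exact isClosed_SS.preimage (continuous_const.mul continuous_id)
  exact this hs

lemma star_RS : star RS ⊆ RS := by
  rintro g hg
  obtain ⟨z, hz, h⟩ := hg
  refine ⟨starRingEnd ℂ z, by simpa using hz, ?_⟩
  rw [← star_star g, h]
  ext x
  simp

noncomputable def AA : StarSubalgebra ℂ (ℝ →ᵇ ℂ) := StarAlgebra.adjoin ℂ RS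

lemma AA_sub : ∀ g ∈ AA, g ∈ SS := by
  intro g hg
  have h1 : g ∈ AA.toSubalgebra := hg
  rw [AA, StarAlgebra.adjoin_toSubalgebra] at h1
  have h2 : Algebra.adjoin ℂ (RS ∪ star RS) ≤ TT :=
    Algebra.adjoin_le (Set.union_subset RS_sub_TT (star_RS.trans RS_sub_TT))
  simpa using h2 h1 1 one_mem_SS

lemma AA_sep : (AA.map (toContinuousMapStarₐ ℂ)).SeparatesPoints := by
  intro x y hxy
  have hI : 1 ≤ |Complex.I.im| := by simp
  refine ⟨_, ⟨toContinuousMapStarₐ ℂ (res Complex.I hI),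
    ⟨res Complex.I hI, StarAlgebra.subset_adjoin ℂ _ ⟨_, _, rfl⟩, rfl⟩, rfl⟩, ?_⟩
  intro h
  change (Complex.I - (x : ℂ))⁻¹ = (Complex.I - (y : ℂ))⁻¹ at h
  apply hxy
  simpa using h

section
variable (μs : ℕ → Measure ℝ) (μ : Measure ℝ)
    [∀ n, IsProbabilityMeasure (μs n)] [IsProbabilityMeasure μ]

noncomputable def VV : Submodule ℂ (ℝ →ᵇ ℂ) where
  carrier := {g | Tendsto (fun n => ∫ x, g x ∂(μs n)) atTop (𝓝 (∫ x, g x ∂μ))}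
  zero_mem' := by simp
  add_mem' := fun {a b} ha hb => by
    simp only [Set.mem_ofPred_eq, BoundedContinuousFunction.coe_add, Pi.add_apply] at *
    rw [integral_add (a.integrable _) (b.integrable _)]
    refine (ha.add hb).congr fun n => ?_
    rw [integral_add (a.integrable _) (b.integrable _)]
  smul_mem' := fun c a ha => by
    simp only [Set.mem_ofPred_eq, BoundedContinuousFunction.coe_smul] at *
    simp only [integral_smul]
    exact ha.const_smul c

lemma isClosed_VV : IsClosed (VV μs μ : Set (ℝ →ᵇ ℂ)) := by
  rw [← isSeqClosed_iff_isClosed]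
  intro u g hu hg
  have key : ∀ (ν : Measure ℝ) [IsProbabilityMeasure ν] (a b : ℝ →ᵇ ℂ),
      dist (∫ x, a x ∂ν) (∫ x, b x ∂ν) ≤ dist a b := by
    intro ν _ a b
    rw [dist_eq_norm, dist_eq_norm, ← integral_sub (a.integrable _) (b.integrable _)]
    exact (a - b).norm_integral_le_norm ν
  change Tendsto (fun n => ∫ x, g x ∂(μs n)) atTop (𝓝 (∫ x, g x ∂μ))
  rw [Metric.tendsto_atTop] at hg ⊢
  intro ε hε
  obtain ⟨k, hk⟩ := hg (ε / 3) (by positivity)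
  have h1 := hk k le_rfl
  have h2 : Tendsto (fun n => ∫ x, u k x ∂(μs n)) atTop (𝓝 (∫ x, u k x ∂μ)) := hu k
  rw [Metric.tendsto_atTop] at h2
  obtain ⟨N, hN⟩ := h2 (ε / 3) (by positivity)
  refine ⟨N, fun n hn => ?_⟩
  have h3 := hN n hn
  have h4 := key (μs n) g (u k)
  have h5 := key μ (u k) g
  rw [dist_comm g] at h4
  have h6 := dist_triangle4 (∫ x, g x ∂(μs n)) (∫ x, u k x ∂(μs n)) (∫ x, u k x ∂μ) (∫ x, g x ∂μ)
  linarith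

variable {μs μ}

lemma SS_le_VV (h : ∀ z : ℂ, 1 ≤ z.im →
        Tendsto (fun n => cauchyTransform (μs n) z) atTop (𝓝 (cauchyTransform μ z))) :
    SS ≤ VV μs μ := by
  refine Submodule.topologicalClosure_minimal _ ?_ (isClosed_VV μs μ)
  rw [Submodule.span_le]
  rintro _ (rfl | ⟨z, hz, rfl⟩)
  · change Tendsto (fun n => ∫ x, (1 : ℝ →ᵇ ℂ) x ∂(μs n)) atTop (𝓝 (∫ x, (1 : ℝ →ᵇ ℂ) x ∂μ))
    simp
  · change Tendsto (fun n => cauchyTransform (μs n) z) atTop (𝓝 (cauchyTransform μ z))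
    rcases le_abs.1 hz with h1 | h1
    · exact h z h1
    · have h2 : ∀ ν : Measure ℝ, cauchyTransform ν z
          = starRingEnd ℂ (cauchyTransform ν (starRingEnd ℂ z)) := by
        intro ν
        rw [cauchyTransform, cauchyTransform, ← integral_conj]
        simp
      simp only [h2]
      exact (Complex.continuous_conj.tendsto _).comp (h (starRingEnd ℂ z) (by simpa using h1))

lemma im_formula (ν : Measure ℝ) [IsProbabilityMeasure ν] (r : ℝ) (hr : 1 ≤ r) :
    1 + r * (cauchyTransform ν (r * Complex.I)).im = ∫ x, x ^ 2 / (x ^ 2 + r ^ 2) ∂ν := by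
  have hz : 1 ≤ |((r : ℂ) * Complex.I).im| := by simpa using hr.trans (le_abs_self r)
  have hi : Integrable (fun x : ℝ => ((r : ℂ) * Complex.I - (x : ℂ))⁻¹) ν :=
    (res _ hz).integrable ν
  have h1 : (cauchyTransform ν (r * Complex.I)).im
      = ∫ x : ℝ, (((r : ℂ) * Complex.I - (x : ℂ))⁻¹).im ∂ν :=
    (Complex.imCLM.integral_comp_comm hi).symm
  have hi2 : Integrable (fun x : ℝ => (((r : ℂ) * Complex.I - (x : ℂ))⁻¹).im) ν :=
    Complex.imCLM.integrable_comp hi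
  have h3 : (1 : ℝ) = ∫ x : ℝ, (1 : ℝ) ∂ν := by simp
  rw [h1, ← integral_const_mul]
  nth_rw 1 [h3]
  rw [← integral_add (integrable_const _) (hi2.const_mul r)]
  congr 1
  ext x
  have : x ^ 2 + r ^ 2 ≠ 0 := by positivity
  have h4 : Complex.normSq ((r : ℂ) * Complex.I - (x : ℂ)) = x ^ 2 + r ^ 2 := by
    simp [Complex.normSq_apply]; ring
  rw [Complex.inv_im, h4]
  simp
  field_simp
  ring

lemma ratio_bound (r : ℝ) (x : ℝ) :
    ‖x ^ 2 / (x ^ 2 + r ^ 2)‖ ≤ 1 := by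
  rw [Real.norm_eq_abs, abs_of_nonneg (by positivity)]
  exact div_le_one_of_le₀ (by nlinarith [sq_nonneg r]) (by positivity)

lemma ratio_int (ν : Measure ℝ) [IsProbabilityMeasure ν] (r : ℝ) :
    Integrable (fun x : ℝ => x ^ 2 / (x ^ 2 + r ^ 2)) ν := by
  refine (integrable_const (1 : ℝ)).mono' ?_ (ae_of_all _ fun x => ratio_bound r x)
  exact Measurable.aestronglyMeasurable (by fun_prop)

lemma tail_le (ν : Measure ℝ) [IsProbabilityMeasure ν] (r : ℝ) (hr : 1 ≤ r) :
    ν.real {x | r < |x|} ≤ 2 * (1 + r * (cauchyTransform ν (r * Complex.I)).im) := by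
  rw [im_formula ν r hr]
  have h1 := mul_meas_ge_le_integral_of_nonneg (μ := ν)
    (ae_of_all _ fun x : ℝ => (by positivity : 0 ≤ x ^ 2 / (x ^ 2 + r ^ 2))) (ratio_int ν r) (1 / 2)
  have h2 : ν.real {x | r < |x|} ≤ ν.real {x : ℝ | 1 / 2 ≤ x ^ 2 / (x ^ 2 + r ^ 2)} := by
    refine measureReal_mono ?_
    intro x hx
    simp only [Set.mem_ofPred_eq] at hx ⊢
    rw [le_div_iff₀ (by positivity)]
    nlinarith [sq_abs x]
  linarith

lemma tendsto_ratio (ν : Measure ℝ) [IsProbabilityMeasure ν] :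
    Tendsto (fun r : ℝ => ∫ x, x ^ 2 / (x ^ 2 + r ^ 2) ∂ν) atTop (𝓝 0) := by
  have := tendsto_integral_filter_of_dominated_convergence (μ := ν) (l := (atTop : Filter ℝ))
    (F := fun r x => x ^ 2 / (x ^ 2 + r ^ 2)) (f := fun _ => (0 : ℝ)) (fun _ => 1)
    (Eventually.of_forall fun r => (ratio_int ν r).aestronglyMeasurable)
    (Eventually.of_forall fun r => ae_of_all _ fun x => ratio_bound r x)
    (integrable_const _) (ae_of_all _ fun x => ?_)
  · simpa using this
  · refine Tendsto.div_atTop tendsto_const_nhds ?_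
    exact tendsto_atTop_add_const_left _ _ (tendsto_pow_atTop two_ne_zero)

lemma tight (h : ∀ z : ℂ, 1 ≤ z.im →
        Tendsto (fun n => cauchyTransform (μs n) z) atTop (𝓝 (cauchyTransform μ z))) :
    IsTightMeasureSet (Set.range μs) := by
  refine isTightMeasureSet_range_of_tendsto_limsup_measureReal_inner_of_norm_eq_one ℝ
    (fun z hz ↦ ?_) 1 (.of_forall fun _ ↦ by simp)
  have hset : ∀ r : ℝ, {x : ℝ | r < ‖inner ℝ z x‖} = {x | r < |x|} := by
    intro r
    ext x
    simp only [Set.mem_ofPred_eq]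
    rw [show inner ℝ z x = x * z from rfl, norm_mul, hz, mul_one, Real.norm_eq_abs]
  simp only [hset]
  have hb : ∀ r : ℝ, IsBoundedUnder (· ≤ ·) atTop (fun n => (μs n).real {x | r < |x|}) :=
    fun r => isBoundedUnder_of ⟨1, fun n => measureReal_le_one⟩
  have h0 : Tendsto (fun r : ℝ => 2 * ∫ x, x ^ 2 / (x ^ 2 + r ^ 2) ∂μ) atTop (𝓝 0) := by
    simpa using (tendsto_ratio μ).const_mul 2
  refine tendsto_of_tendsto_of_tendsto_of_le_of_le' tendsto_const_nhds h0 ?_ ?_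
  · refine Eventually.of_forall fun r => ?_
    refine le_limsup_of_le (hb r) fun u hu ↦ ?_
    exact measureReal_nonneg.trans hu.exists.choose_spec
  · filter_upwards [eventually_ge_atTop 1] with r hr
    have ht : Tendsto (fun n => 2 * (1 + r * (cauchyTransform (μs n) (r * Complex.I)).im)) atTop
        (𝓝 (2 * (1 + r * (cauchyTransform μ (r * Complex.I)).im))) := by
      have := (Complex.continuous_im.tendsto _).comp (h (r * Complex.I) (by simpa using hr))
      exact ((this.const_mul r).const_add 1).const_mul 2
    rw [← im_formula μ r hr, ← ht.limsup_eq]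
    refine limsup_le_limsup (.of_forall fun n => tail_le (μs n) r hr) ?_ ht.isBoundedUnder_le
    exact IsCoboundedUnder.of_frequently_ge <| .of_forall fun _ ↦ measureReal_nonneg

end

theorem weakConv_iff_cauchyTransform
    (μs : ℕ → Measure ℝ) (μ : Measure ℝ)
    (hprobs : ∀ n, IsProbabilityMeasure (μs n))
    (hprob : IsProbabilityMeasure μ) :
    WeakConv μs μ ↔
      ∀ z : ℂ, 1 ≤ z.im →
        Tendsto (fun n => cauchyTransform (μs n) z) atTop (𝓝 (cauchyTransform μ z)) := by
  let P : ℕ → ProbabilityMeasure ℝ := fun n => ⟨μs n, hprobs n⟩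
  let Q : ProbabilityMeasure ℝ := ⟨μ, hprob⟩
  have hW : WeakConv μs μ ↔ Tendsto P atTop (𝓝 Q) := by
    rw [ProbabilityMeasure.tendsto_iff_forall_integral_tendsto]
    rfl
  rw [hW]
  constructor
  · intro h z hz
    rw [ProbabilityMeasure.tendsto_iff_forall_integral_rclike_tendsto ℂ] at h
    exact h (res z (hz.trans (le_abs_self _)))
  · intro h
    refine ProbabilityMeasure.tendsto_of_tight_of_separatesPoints ℂ (μ := P) (μ₀ := Q) (tight (μs := μs) (μ := μ) h) AA_sep ?_
    intro g hg
    exact SS_le_VV h (AA_sub g hg)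
end

section
/- Let μ₁ and μ₂ be Borel probability measures on ℝ whose Cauchy transforms agree on the closed horizontal half-plane {z ∈ ℂ : Im(z) ≥ 1}, i.e., ∫_ℝ 1/(z − x) dμ₁(x) = ∫_ℝ 1/(z − x) dμ₂(x) for every z ∈ ℂ with Im(z) ≥ 1. Then μ₁ = μ₂. -/
open MeasureTheory

lemma CT.ne {z : ℂ} (hz : 0 < z.im) (x : ℝ) : z - (x : ℂ) ≠ 0 := by
  intro h
  have := congrArg Complex.im h
  simp at this
  linarith

lemma CT.cont {z : ℂ} (hz : 0 < z.im) : Continuous fun x : ℝ => (z - (x : ℂ))⁻¹ :=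
  Continuous.inv₀ (by fun_prop) (CT.ne hz)

lemma CT.bound {z : ℂ} (hz : 1 ≤ z.im) (x : ℝ) : ‖(z - (x : ℂ))⁻¹‖ ≤ 1 := by
  rw [norm_inv]
  apply inv_le_one_of_one_le₀
  calc 1 ≤ |(z - (x : ℂ)).im| := by simpa using hz.trans (le_abs_self _)
    _ ≤ _ := Complex.abs_im_le_norm _

lemma CT.integrable (μ : Measure ℝ) [IsProbabilityMeasure μ] {z : ℂ} (hz : 1 ≤ z.im) (n : ℕ) :
    Integrable (fun x : ℝ => ((z - (x : ℂ))⁻¹) ^ n) μ := by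
  refine Integrable.of_bound
    ((CT.cont (by linarith)).pow n).aestronglyMeasurable 1 (ae_of_all _ fun x => ?_)
  rw [norm_pow]
  exact pow_le_one₀ (norm_nonneg _) (CT.bound hz x)

lemma CT.deriv (μ : Measure ℝ) [IsProbabilityMeasure μ] {z : ℂ} (hz : 1 < z.im) (n : ℕ) :
    HasDerivAt (fun w : ℂ => ∫ x : ℝ, ((w - (x : ℂ))⁻¹) ^ n ∂μ)
      (∫ x : ℝ, -(n : ℂ) * ((z - (x : ℂ))⁻¹) ^ (n + 1) ∂μ) z := by
  have hs : {w : ℂ | 1 < w.im} ∈ nhds z :=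
    (isOpen_lt continuous_const Complex.continuous_im).mem_nhds hz
  refine (hasDerivAt_integral_of_dominated_loc_of_deriv_le (μ := μ)
    (F := fun (w : ℂ) (x : ℝ) => ((w - (x : ℂ))⁻¹) ^ n)
    (F' := fun (w : ℂ) (x : ℝ) => -(n : ℂ) * ((w - (x : ℂ))⁻¹) ^ (n + 1))
    (bound := fun _ => (n : ℝ)) hs ?_
    (CT.integrable μ hz.le n) ?_ ?_ (integrable_const _) ?_).2
  · filter_upwards [hs] with w hw using (CT.integrable μ (le_of_lt hw) n).aestronglyMeasurable
  · exact ((CT.integrable μ hz.le (n+1)).const_mul _).aestronglyMeasurable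
  · refine ae_of_all _ fun x w hw => ?_
    rw [norm_mul, norm_neg, norm_pow, Complex.norm_natCast]
    exact mul_le_of_le_one_right (by positivity)
      (pow_le_one₀ (norm_nonneg _) (CT.bound (le_of_lt hw) x))
  · refine ae_of_all _ fun x w hw => ?_
    have h0 : w - (x : ℂ) ≠ 0 := CT.ne (lt_trans one_pos hw) x
    have h1 := (((hasDerivAt_id w).sub_const (x : ℂ)).inv h0).pow n
    refine h1.congr_deriv ?_
    rcases n with _ | n
    · simp
    · simp [pow_succ]
      field_simp
      ring

lemma CT.moments (μ₁ μ₂ : Measure ℝ) [IsProbabilityMeasure μ₁] [IsProbabilityMeasure μ₂]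
    (h : ∀ z : ℂ, 1 ≤ z.im → cauchyTransform μ₁ z = cauchyTransform μ₂ z) (n : ℕ) :
    ∀ z : ℂ, 1 < z.im → ∫ x : ℝ, ((z - (x : ℂ))⁻¹) ^ n ∂μ₁ = ∫ x : ℝ, ((z - (x : ℂ))⁻¹) ^ n ∂μ₂ := by
  induction n with
  | zero => intro z _; simp
  | succ n ih =>
    intro z hz
    rcases Nat.eq_zero_or_pos n with rfl | hn
    · simpa [cauchyTransform] using h z hz.le
    have hs : {w : ℂ | 1 < w.im} ∈ nhds z :=
      (isOpen_lt continuous_const Complex.continuous_im).mem_nhds hz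
    have h1 := CT.deriv μ₁ hz n
    have h2 := (CT.deriv μ₂ hz n).congr_of_eventuallyEq
      (by filter_upwards [hs] with w hw using ih w hw)
    have h3 := h1.unique h2
    rw [integral_const_mul, integral_const_mul] at h3
    exact mul_left_cancel₀ (neg_ne_zero.mpr (by exact_mod_cast hn.ne')) h3

/-- The Cayley function `1 - 4i/(2i - x)`, as a bounded continuous function. -/
noncomputable def CT.c : BoundedContinuousFunction ℝ ℂ :=
  BoundedContinuousFunction.ofNormedAddCommGroup
    (fun x : ℝ => 1 + (-4 * Complex.I) * (2 * Complex.I - (x : ℂ))⁻¹)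
    (continuous_const.add (continuous_const.mul (CT.cont (by simp)))) 5 (fun x => by
      refine (norm_add_le _ _).trans ?_
      rw [norm_mul]
      have := CT.bound (z := 2 * Complex.I) (by simp) x
      have h4 : ‖(-4 * Complex.I : ℂ)‖ = 4 := by simp
      rw [h4, norm_one]
      linarith)

lemma CT.c_apply (x : ℝ) :
    CT.c x = 1 + (-4 * Complex.I) * (2 * Complex.I - (x : ℂ))⁻¹ := rfl

lemma CT.c_star (x : ℝ) : CT.c x * star (CT.c x) = 1 := by
  have h0 : 2 * Complex.I - (x : ℂ) ≠ 0 := CT.ne (by simp) x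
  have h1 : -(2 * Complex.I) - (x : ℂ) ≠ 0 := by
    intro h
    have := congrArg Complex.im h
    simp at this
  have e : star (CT.c x) = 1 + (4 * Complex.I) * (-(2 * Complex.I) - (x : ℂ))⁻¹ := by
    rw [CT.c_apply]; simp
  rw [e, CT.c_apply, ← div_eq_mul_inv, ← div_eq_mul_inv, one_add_div h0, one_add_div h1,
    div_mul_div_comm, div_eq_one_iff_eq (mul_ne_zero h0 h1)]
  ring

lemma CT.pow_int (μ₁ μ₂ : Measure ℝ) [IsProbabilityMeasure μ₁] [IsProbabilityMeasure μ₂]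
    (h : ∀ z : ℂ, 1 ≤ z.im → cauchyTransform μ₁ z = cauchyTransform μ₂ z) (n : ℕ) :
    ∫ x : ℝ, CT.c x ^ n ∂μ₁ = ∫ x : ℝ, CT.c x ^ n ∂μ₂ := by
  simp only [CT.c_apply, add_comm (1 : ℂ), add_pow, mul_pow, one_pow, mul_one]
  rw [integral_finsetSum, integral_finsetSum]
  · refine Finset.sum_congr rfl fun k _ => ?_
    rw [integral_mul_const, integral_mul_const, integral_const_mul, integral_const_mul,
      CT.moments μ₁ μ₂ h k _ (by simp)]
  all_goals
    intro k _
    exact ((CT.integrable _ (by simp) k).const_mul _).mul_const _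

lemma CT.mixed_int (μ₁ μ₂ : Measure ℝ) [IsProbabilityMeasure μ₁] [IsProbabilityMeasure μ₂]
    (h : ∀ z : ℂ, 1 ≤ z.im → cauchyTransform μ₁ z = cauchyTransform μ₂ z) (m n : ℕ) :
    ∫ x : ℝ, CT.c x ^ m * star (CT.c x) ^ n ∂μ₁ =
      ∫ x : ℝ, CT.c x ^ m * star (CT.c x) ^ n ∂μ₂ := by
  rcases le_total n m with hnm | hnm
  · obtain ⟨k, rfl⟩ := Nat.exists_eq_add_of_le hnm
    have : ∀ x, CT.c x ^ (n + k) * star (CT.c x) ^ n = CT.c x ^ k := fun x => by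
      rw [pow_add, mul_right_comm, ← mul_pow, CT.c_star, one_pow, one_mul]
    simp only [this]
    exact CT.pow_int μ₁ μ₂ h k
  · obtain ⟨k, rfl⟩ := Nat.exists_eq_add_of_le hnm
    have : ∀ x, CT.c x ^ m * star (CT.c x) ^ (m + k) = (starRingEnd ℂ) (CT.c x ^ k) := fun x => by
      rw [pow_add, ← mul_assoc, ← mul_pow, CT.c_star, one_pow, one_mul, map_pow]; rfl
    simp only [this]
    rw [integral_conj, integral_conj, CT.pow_int μ₁ μ₂ h k]

theorem cauchyTransform_injective
    (μ₁ μ₂ : Measure ℝ)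
    (hprob₁ : IsProbabilityMeasure μ₁) (hprob₂ : IsProbabilityMeasure μ₂)
    (h : ∀ z : ℂ, 1 ≤ z.im → cauchyTransform μ₁ z = cauchyTransform μ₂ z) :
    μ₁ = μ₂ := by
  refine ext_of_forall_mem_subalgebra_integral_eq_of_pseudoEMetric_complete_countable
    (𝕜 := ℂ) (A := StarAlgebra.adjoin ℂ {CT.c}) ?_ ?_
  · intro x y hxy
    refine ⟨CT.c, ⟨BoundedContinuousFunction.toContinuousMapStarₐ ℂ CT.c,
      ⟨CT.c, StarAlgebra.subset_adjoin ℂ _ rfl, rfl⟩, rfl⟩, ?_⟩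
    intro hc
    apply hxy
    rw [CT.c_apply, CT.c_apply] at hc
    have h1 := mul_left_cancel₀ (by simp) (add_left_cancel hc)
    have h2 := sub_right_injective (inv_injective h1)
    exact_mod_cast h2
  · intro g hg
    have hg' : g ∈ Algebra.adjoin ℂ ({CT.c} ∪ star {CT.c}) := hg
    rw [← Subalgebra.mem_toSubmodule, Algebra.adjoin_eq_span] at hg'
    clear hg
    induction hg' using Submodule.span_induction with
    | mem g hg =>
      have : ({CT.c} ∪ star {CT.c} : Set (BoundedContinuousFunction ℝ ℂ)) = {CT.c, star CT.c} := by
        rw [Set.star_singleton]; rfl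
      rw [this] at hg
      obtain ⟨m, n, rfl⟩ := (Submonoid.mem_closure_pair _ _ _).1 hg
      exact CT.mixed_int μ₁ μ₂ h m n
    | zero => simp
    | add f g _ _ hf hg =>
      simp only [BoundedContinuousFunction.coe_add, Pi.add_apply]
      rw [integral_add (f.integrable μ₁) (g.integrable μ₁),
        integral_add (f.integrable μ₂) (g.integrable μ₂), hf, hg]
    | smul a f _ hf =>
      simp only [BoundedContinuousFunction.coe_smul]
      rw [integral_smul, integral_smul, hf]
end

section
/- Let k ≥ 0 be an integer and let μ = Σ_{i=1}^{k+1} a_i δ_{b_i} be a Borel probability measure on ℝ supported on the k+1 distinct points b_1, …, b_{k+1}, with weights a_i > 0 summing to 1. Let (μ_n)_{n≥1} be Borel probability measures on ℝ with finite moments of order up to 2k+2 such that ∫ x^i dμ_n → ∫ x^i dμ as n → ∞ for every i = 1, …, 2k+2. Then μ_n converges weakly to μ. -/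
open MeasureTheory Filter Topology BoundedContinuousFunction

theorem aux_int (k : ℕ) (b a : Fin (k + 1) → ℝ) (ha : ∀ i, 0 < a i) (g : ℝ → ℝ) :
    ∫ x, g x ∂(∑ i, ENNReal.ofReal (a i) • Measure.dirac (b i)) = ∑ i, a i * g (b i) := by
  rw [integral_finsetSum_measure]
  · refine Finset.sum_congr rfl fun i _ => ?_
    rw [integral_smul_measure, integral_dirac, ENNReal.toReal_ofReal (ha i).le, smul_eq_mul]
  · intro i _
    exact (integrable_dirac (by simp)).smul_measure ENNReal.ofReal_ne_top

theorem aux_bound_s7 (k : ℕ) (b : Fin (k + 1) → ℝ) (hb : Function.Injective b) (f : ℝ →ᵇ ℝ)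
    (ε : ℝ) (hε : 0 < ε) : ∃ C : ℝ, 0 ≤ C ∧ ∀ x,
      |f x - (Lagrange.interpolate Finset.univ b (fun i => f (b i))).eval x| ≤
        ε + C * ((Lagrange.nodal Finset.univ b) ^ 2).eval x := by
  set L := Lagrange.interpolate Finset.univ b (fun i => f (b i)) with hL
  have hcont : Continuous fun x => f x - L.eval x := by fun_prop
  have h1 : ∀ i, ∃ δ > 0, ∀ x, |x - b i| < δ → |f x - L.eval x| < ε := by
    intro i
    obtain ⟨δ, hδ, h⟩ := Metric.continuous_iff.1 hcont (b i) ε hε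
    refine ⟨δ, hδ, fun x hx => ?_⟩
    have := h x hx
    rw [Real.dist_eq, hL, Lagrange.eval_interpolate_at_node _ hb.injOn (Finset.mem_univ i)] at this
    rwa [sub_self, sub_zero] at this
  choose δ' hδ' hd using h1
  obtain ⟨δ, hδ, hle⟩ : ∃ δ > 0, ∀ i, δ ≤ δ' i := by
    obtain ⟨i, hi⟩ := Finite.exists_min δ'
    exact ⟨δ' i, hδ' i, hi⟩
  set S := ∑ i, |Lagrange.nodalWeight Finset.univ b i| * δ⁻¹ * |f (b i)| with hS
  have hS0 : 0 ≤ S := Finset.sum_nonneg fun i _ => by positivity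
  set d := δ ^ (k + 1) with hdd
  have hd0 : 0 < d := by positivity
  refine ⟨‖f‖ / d ^ 2 + S / d, by positivity, fun x => ?_⟩
  rw [Polynomial.eval_pow]
  by_cases hx : ∃ i, |x - b i| < δ
  · obtain ⟨i, hi⟩ := hx
    have := hd i x (hi.trans_le (hle i))
    have : 0 ≤ (‖f‖ / d ^ 2 + S / d) * (Polynomial.eval x (Lagrange.nodal Finset.univ b)) ^ 2 := by
      positivity
    linarith
  · push Not at hx
    have hne : ∀ i ∈ Finset.univ, x ≠ b i := by
      intro i _ h
      have := hx i
      rw [h, sub_self, abs_zero] at this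
      linarith
    set Q := Polynomial.eval x (Lagrange.nodal Finset.univ b) with hQ
    have hQd : d ≤ |Q| := by
      rw [hQ, Lagrange.eval_nodal, Finset.abs_prod]
      calc d = ∏ i : Fin (k + 1), δ := by simp [hdd]
        _ ≤ _ := Finset.prod_le_prod (fun _ _ => hδ.le) (fun i _ => hx i)
    have hLx : |L.eval x| ≤ |Q| * S := by
      rw [hL, Lagrange.eval_interpolate_not_at_node _ hne, abs_mul]
      refine mul_le_mul_of_nonneg_left ?_ (abs_nonneg _)
      refine (Finset.abs_sum_le_sum_abs _ _).trans (Finset.sum_le_sum fun i _ => ?_)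
      rw [abs_mul, abs_mul, abs_inv]
      gcongr
      exact hx i
    have hf : |f x| ≤ ‖f‖ := f.norm_coe_le_norm x
    have e1 : ‖f‖ ≤ ‖f‖ / d ^ 2 * Q ^ 2 := by
      rw [div_mul_eq_mul_div, le_div_iff₀ (by positivity), ← sq_abs Q]
      gcongr
    have e2 : |Q| * S ≤ S / d * Q ^ 2 := by
      rw [div_mul_eq_mul_div, le_div_iff₀ (by positivity), ← sq_abs Q]
      nlinarith [mul_le_mul_of_nonneg_left hQd (mul_nonneg (abs_nonneg Q) hS0)]
    have := abs_sub (f x) (L.eval x)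
    linarith

theorem moment_convergence_to_finitely_supported
    (k : ℕ)
    (b : Fin (k + 1) → ℝ) (hb : Function.Injective b)
    (a : Fin (k + 1) → ℝ) (ha : ∀ i, 0 < a i) (hsum : ∑ i, a i = 1)
    (μ : Measure ℝ)
    (hμ : μ = ∑ i, ENNReal.ofReal (a i) • Measure.dirac (b i))
    (μs : ℕ → Measure ℝ)
    (hprobs : ∀ n, IsProbabilityMeasure (μs n))
    (hfin : ∀ n, ∀ i : ℕ, i ≤ 2 * k + 2 → Integrable (fun x => x ^ i) (μs n))
    (hmom : ∀ i : ℕ, 1 ≤ i → i ≤ 2 * k + 2 →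
      Tendsto (fun n => ∫ x, x ^ i ∂(μs n)) atTop (𝓝 (∫ x, x ^ i ∂μ))) :
    WeakConv μs μ := by
  have hp : ∀ p : Polynomial ℝ, p.natDegree ≤ 2 * k + 2 →
      (∀ n, Integrable (fun x => p.eval x) (μs n)) ∧
      Tendsto (fun n => ∫ x, p.eval x ∂(μs n)) atTop (𝓝 (∫ x, p.eval x ∂μ)) := by
    intro p hdeg
    have hI : ∀ n, ∀ i ∈ Finset.range (p.natDegree + 1),
        Integrable (fun x => p.coeff i * x ^ i) (μs n) := by
      intro n i hi
      exact (hfin n i (by have := Finset.mem_range.1 hi; omega)).const_mul _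
    simp_rw [Polynomial.eval_eq_sum_range]
    refine ⟨fun n => integrable_finset_sum _ (hI n), ?_⟩
    have hIμ : ∀ g : ℝ → ℝ, Integrable g μ := by
      intro g
      rw [hμ, integrable_finsetSum_measure]
      intro i _
      exact (integrable_dirac (by simp)).smul_measure ENNReal.ofReal_ne_top
    rw [integral_finset_sum _ (fun i _ => hIμ _)]
    simp_rw [fun n => integral_finset_sum _ (hI n), integral_const_mul]
    refine tendsto_finset_sum _ fun i hi => Tendsto.const_mul _ ?_
    rcases Nat.eq_zero_or_pos i with rfl | h0
    · have : ∫ x, x ^ 0 ∂μ = 1 := by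
        rw [hμ, aux_int k b a ha]; simpa using hsum
      rw [this]
      simp
    · exact hmom i h0 (by have := Finset.mem_range.1 hi; omega)
  intro f
  set L := Lagrange.interpolate Finset.univ b (fun i => f (b i)) with hL
  set P := (Lagrange.nodal Finset.univ b) ^ 2 with hP
  have hLd : L.natDegree ≤ 2 * k + 2 := by
    have := Lagrange.degree_interpolate_lt (r := fun i => f (b i)) (s := Finset.univ) hb.injOn
    have h2 := Polynomial.natDegree_le_of_degree_le this.le
    rw [Finset.card_univ, Fintype.card_fin, ← hL] at h2
    omega
  have hPd : P.natDegree ≤ 2 * k + 2 := by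
    rw [hP, Polynomial.natDegree_pow, Lagrange.natDegree_nodal]
    simp; omega
  obtain ⟨hLi, hLt⟩ := hp L hLd
  obtain ⟨hPi, hPt⟩ := hp P hPd
  have hP0 : ∫ x, P.eval x ∂μ = 0 := by
    rw [hμ, aux_int k b a ha]
    refine Finset.sum_eq_zero fun i _ => ?_
    rw [hP, Polynomial.eval_pow, Lagrange.eval_nodal_at_node (Finset.mem_univ i)]
    simp
  have hLf : ∫ x, L.eval x ∂μ = ∫ x, f x ∂μ := by
    rw [hμ, aux_int k b a ha, aux_int k b a ha]
    refine Finset.sum_congr rfl fun i _ => ?_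
    rw [hL, Lagrange.eval_interpolate_at_node _ hb.injOn (Finset.mem_univ i)]
  rw [hP0] at hPt
  rw [hLf] at hLt
  have hdiff : Tendsto (fun n => ∫ x, f x ∂(μs n) - ∫ x, L.eval x ∂(μs n)) atTop (𝓝 0) := by
    rw [Metric.tendsto_atTop]
    intro ε hε
    obtain ⟨C, hC, hb'⟩ := aux_bound_s7 k b hb f (ε / 2) (by positivity)
    have hCt := hPt.const_mul C
    rw [mul_zero] at hCt
    obtain ⟨N, hN⟩ := Metric.tendsto_atTop.1 hCt (ε / 2) (by positivity)
    refine ⟨N, fun n hn => ?_⟩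
    have h1 := hN n hn
    have := hprobs n
    rw [Real.dist_eq, sub_zero] at h1 ⊢
    rw [← integral_sub (f.integrable _) (hLi n)]
    have h2 : |∫ x, (f x - L.eval x) ∂(μs n)| ≤ ∫ x, (ε / 2 + C * P.eval x) ∂(μs n) := by
      refine (abs_integral_le_integral_abs).trans (integral_mono ?_ ?_ hb')
      · exact ((f.integrable _).sub (hLi n)).abs
      · exact (integrable_const _).add ((hPi n).const_mul C)
    rw [integral_add (integrable_const _) ((hPi n).const_mul C), integral_const_mul] at h2
    simp at h2
    have := (abs_lt.1 h1).2
    linarith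
  simpa using hdiff.add hLt
end

section
/- Let γ ∈ ℝ, s ≥ 0, k ≥ 0, let b_1, …, b_k be distinct nonzero real numbers and λ_1, …, λ_k > 0, and let μ be the Borel probability measure on ℝ whose characteristic function is φ_μ(u) = exp( iγu − s²u²/2 + Σ_{i=1}^{k} λ_i (e^{iub_i} − 1) ) for all u ∈ ℝ (such a μ exists and is classically infinitely divisible). Let (μ_n)_{n≥1} be Borel probability measures on ℝ, each infinitely divisible with respect to classical convolution, with finite moments of order up to 2k+4, and suppose ∫ x^i dμ_n → ∫ x^i dμ as n → ∞ for every i = 1, …, 2k+4. Then μ_n converges weakly to μ. -/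
open MeasureTheory Filter Topology BoundedContinuousFunction

/-- The characteristic function of a Borel measure μ on ℝ: u ↦ ∫ e^{iux} dμ(x). -/
noncomputable def charFn (μ : Measure ℝ) (u : ℝ) : ℂ :=
  ∫ x, Complex.exp (Complex.I * (u : ℂ) * (x : ℂ)) ∂μ


namespace MC

/-- Exponential moments of a probability measure. -/
def Good (ν : Measure ℝ) (h : ℂ → ℂ) : Prop :=
  IsProbabilityMeasure ν ∧ ∀ z : ℂ, Integrable (fun x : ℝ => Complex.exp (z * x)) ν ∧
    ∫ x, Complex.exp (z * (x : ℂ)) ∂ν = Complex.exp (h z)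

lemma good_conv {ν₁ ν₂ : Measure ℝ} {h₁ h₂ : ℂ → ℂ} (H₁ : Good ν₁ h₁) (H₂ : Good ν₂ h₂) :
    Good (classicalConv ν₁ ν₂) (fun z => h₁ z + h₂ z) := by
  obtain ⟨P₁, H₁⟩ := H₁
  obtain ⟨P₂, H₂⟩ := H₂
  refine ⟨Measure.isProbabilityMeasure_map (by fun_prop), fun z => ⟨?_, ?_⟩⟩
  · unfold classicalConv
    rw [integrable_map_measure (by fun_prop) (by fun_prop)]
    refine ((H₁ z).1.mul_prod (H₂ z).1).congr (ae_of_all _ fun p => ?_)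
    simp [mul_add, Complex.exp_add]
  · unfold classicalConv
    rw [integral_map (by fun_prop) (by fun_prop), Complex.exp_add, ← (H₁ z).2, ← (H₂ z).2,
      ← integral_prod_mul]
    refine integral_congr_ae (ae_of_all _ fun p => ?_)
    simp [mul_add, Complex.exp_add]

lemma good_gauss (γ s : ℝ) :
    Good (ProbabilityTheory.gaussianReal γ (Real.toNNReal (s ^ 2)))
      (fun z => z * γ + (s : ℂ) ^ 2 * z ^ 2 / 2) := by
  refine ⟨inferInstance, fun z => ⟨?_, ?_⟩⟩
  · have h := ProbabilityTheory.integrable_exp_mul_gaussianReal (μ := γ)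
      (v := Real.toNNReal (s ^ 2)) z.re
    refine h.mono' (by fun_prop) (ae_of_all _ fun x => ?_)
    simp [Complex.norm_exp]
  · have := ProbabilityTheory.complexMGF_id_gaussianReal (μ := γ) (v := Real.toNNReal (s ^ 2)) z
    rw [ProbabilityTheory.complexMGF] at this
    simp only [id] at this
    rw [this]
    congr 3
    rw [← Complex.ofReal_pow]
    congr 1
    norm_cast
    exact Real.coe_toNNReal _ (sq_nonneg s)

lemma good_poisson (l b : ℝ) (hl : 0 < l) :
    ∃ ν, Good ν (fun z => (l : ℂ) * (Complex.exp (z * b) - 1)) := by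
  have key : ∀ z : ℂ, Integrable (fun n : ℕ => Complex.exp (z * ((b * n : ℝ) : ℂ)))
      (ProbabilityTheory.poissonMeasure l.toNNReal) := by
    intro z
    rw [ProbabilityTheory.integrable_poissonMeasure_iff]
    have := (Real.summable_pow_div_factorial (l * Real.exp (z.re * b))).mul_left (Real.exp (-l))
    refine this.congr fun n => ?_
    rw [Complex.norm_exp, Real.coe_toNNReal _ hl.le, mul_pow, ← Real.exp_nat_mul]
    simp only [Complex.mul_re, Complex.ofReal_re, Complex.ofReal_im]
    ring_nf
  refine ⟨(ProbabilityTheory.poissonMeasure l.toNNReal).map (fun n : ℕ => b * (n : ℝ)),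
    Measure.isProbabilityMeasure_map (by fun_prop), fun z => ⟨?_, ?_⟩⟩
  · rw [integrable_map_measure (by fun_prop) (by fun_prop)]
    exact key z
  · rw [integral_map (by fun_prop) (by fun_prop), ProbabilityTheory.integral_poissonMeasure]
    have h1 : Complex.exp ((l : ℂ) * (Complex.exp (z * b) - 1)) =
        Complex.exp (-l) * Complex.exp (l * Complex.exp (z * b)) := by
      rw [← Complex.exp_add]; ring_nf
    rw [h1]
    have h2 := (NormedSpace.expSeries_div_hasSum_exp ((l : ℂ) * Complex.exp (z * b))).mul_left
      (Complex.exp (-l))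
    rw [← Complex.exp_eq_exp_ℂ] at h2
    rw [← h2.tsum_eq]
    congr 1
    ext n
    rw [Real.coe_toNNReal _ hl.le, mul_pow, ← Complex.exp_nat_mul]
    simp only [Complex.real_smul]
    push_cast
    ring_nf

lemma good_exists (γ s : ℝ) (k : ℕ) (b lam : Fin k → ℝ) (hlam : ∀ i, 0 < lam i) :
    ∃ ν, Good ν (fun z => z * γ + (s : ℂ) ^ 2 * z ^ 2 / 2 +
      ∑ i, (lam i : ℂ) * (Complex.exp (z * b i) - 1)) := by
  induction k with
  | zero => exact ⟨_, by simpa using good_gauss γ s⟩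
  | succ k ih =>
    obtain ⟨ν, hν⟩ := ih (fun i => b i.castSucc) (fun i => lam i.castSucc) (fun i => hlam _)
    obtain ⟨ρ, hρ⟩ := good_poisson (lam (Fin.last k)) (b (Fin.last k)) (hlam _)
    refine ⟨classicalConv ν ρ, ?_⟩
    convert good_conv hν hρ using 2 with z
    rw [Fin.sum_univ_castSucc]
    ring

lemma charFn_eq (μ : Measure ℝ) (u : ℝ) : charFn μ u = charFun μ u := by
  rw [charFn, charFun_apply_real]
  congr 1; ext x; ring_nf

/-- The Levy cumulants. -/
noncomputable def cum (γ s : ℝ) {k : ℕ} (b lam : Fin k → ℝ) (j : ℕ) : ℝ :=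
  (if j = 1 then γ else 0) + (if j = 2 then s ^ 2 else 0) + ∑ i, lam i * b i ^ j

lemma good_mu (γ s : ℝ) (k : ℕ) (b lam : Fin k → ℝ) (hlam : ∀ i, 0 < lam i)
    (μ : Measure ℝ) (hprob : IsProbabilityMeasure μ)
    (hchar : ∀ u : ℝ, charFn μ u =
      Complex.exp (Complex.I * (γ : ℂ) * (u : ℂ) - (s : ℂ) ^ 2 * (u : ℂ) ^ 2 / 2
        + ∑ i, (lam i : ℂ) * (Complex.exp (Complex.I * (u : ℂ) * (b i : ℂ)) - 1))) :
    Good μ (fun z => z * γ + (s : ℂ) ^ 2 * z ^ 2 / 2 +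
      ∑ i, (lam i : ℂ) * (Complex.exp (z * b i) - 1)) := by
  obtain ⟨ν, hν⟩ := good_exists γ s k b lam hlam
  have : IsProbabilityMeasure ν := hν.1
  have : μ = ν := by
    apply Measure.ext_of_charFun
    ext u
    rw [← charFn_eq, ← charFn_eq, hchar, charFn, (hν.2 (Complex.I * u)).2]
    congr 2
    rw [mul_pow, Complex.I_sq]
    ring
  rwa [this]

lemma mom_rec (γ s : ℝ) (k : ℕ) (b lam : Fin k → ℝ)
    (μ : Measure ℝ) 
    (H : Good μ (fun z => z * γ + (s : ℂ) ^ 2 * z ^ 2 / 2 +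
      ∑ i, (lam i : ℂ) * (Complex.exp (z * b i) - 1))) (j : ℕ) :
    ∫ x, x ^ (j + 1) ∂μ = ∑ i ∈ Finset.range (j + 1), (j.choose i : ℝ) * (∫ x, x ^ i ∂μ) *
      cum γ s b lam (j - i + 1) := by
  obtain ⟨P, H⟩ := H
  have hint : ∀ t : ℝ, Integrable (fun x => Real.exp (t * x)) μ := by
    intro t
    have := (H t).1.re
    refine this.congr (ae_of_all _ fun x => ?_)
    have := Complex.exp_ofReal_re (t * x)
    rw [Complex.ofReal_mul] at this
    exact this
  have hset : ProbabilityTheory.integrableExpSet id μ = Set.univ := by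
    ext t; simpa [ProbabilityTheory.integrableExpSet] using hint t
  have hm : ∀ n, iteratedDeriv n (ProbabilityTheory.mgf id μ) 0 = ∫ x, x ^ n ∂μ := by
    intro n
    rw [ProbabilityTheory.iteratedDeriv_mgf_zero (by simp [hset])]
    simp
  have hmgf : ProbabilityTheory.mgf id μ = fun t => Real.exp (t * γ + s ^ 2 * t ^ 2 / 2 +
      ∑ i, lam i * (Real.exp (t * b i) - 1)) := by
    ext t
    have h2 := (H t).2
    have : ((ProbabilityTheory.mgf id μ t : ℝ) : ℂ) = ∫ x, Complex.exp (t * (x : ℂ)) ∂μ := by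
      rw [ProbabilityTheory.mgf, ← integral_complex_ofReal]
      simp
    rw [h2] at this
    simp only at this
    exact_mod_cast this
  set h' : ℝ → ℝ := fun t => γ + s ^ 2 * t + ∑ i, lam i * b i * Real.exp (b i * t) with hh'
  have hd : deriv (ProbabilityTheory.mgf id μ) = fun t => ProbabilityTheory.mgf id μ t * h' t := by
    ext t
    rw [hmgf]
    apply HasDerivAt.deriv
    have hs : HasDerivAt (fun t : ℝ => ∑ i, lam i * (Real.exp (t * b i) - 1))
        (∑ i, lam i * b i * Real.exp (b i * t)) t := by
      apply HasDerivAt.fun_sum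
      intro i _
      have := ((((hasDerivAt_id t).mul_const (b i)).exp.sub_const 1).const_mul (lam i))
      refine this.congr_deriv ?_
      simp only [id, mul_comm t]
      ring
    have h1 : HasDerivAt (fun t : ℝ => t * γ + s ^ 2 * t ^ 2 / 2) (γ + s ^ 2 * t) t := by
      have := ((hasDerivAt_id t).mul_const γ).add
        ((((hasDerivAt_id t).pow 2).const_mul (s ^ 2)).div_const 2)
      refine this.congr_deriv ?_
      simp; ring
    exact (h1.add hs).exp
  have hcd : ContDiff ℝ ⊤ (ProbabilityTheory.mgf id μ) := by
    rw [hmgf]; fun_prop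
  have hcd' : ContDiff ℝ ⊤ h' := by fun_prop
  have hder : ∀ n, iteratedDeriv n h' 0 = cum γ s b lam (n + 1) := by
    intro n
    have e1 : iteratedDeriv n (fun t : ℝ => ∑ i, lam i * b i * Real.exp (b i * t)) 0 =
        ∑ i, lam i * b i ^ (n + 1) := by
      rw [iteratedDeriv_fun_sum (fun i _ => by fun_prop)]
      refine Finset.sum_congr rfl fun i _ => ?_
      rw [iteratedDeriv_const_mul_field, iteratedDeriv_exp_const_mul]
      simp; ring
    have e2 : iteratedDeriv n (fun t : ℝ => γ + s ^ 2 * t) 0 =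
        (if n + 1 = 1 then γ else 0) + (if n + 1 = 2 then s ^ 2 else 0) := by
      have hdd : deriv (fun t : ℝ => γ + s ^ 2 * t) = fun t => s ^ 2 := by
        ext t
        simp
      rcases n with _ | _ | n
      · simp
      · rw [zero_add, iteratedDeriv_one, hdd]; simp
      · rw [iteratedDeriv_succ', iteratedDeriv_succ', hdd]; simp
    rw [hh', iteratedDeriv_fun_add (by fun_prop) (by fun_prop), e1, e2, cum]
  rw [← hm, iteratedDeriv_succ', hd, iteratedDeriv_fun_mul
    (hcd.contDiffAt.of_le (by exact_mod_cast le_top)) (hcd'.contDiffAt.of_le (by exact_mod_cast le_top))]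
  refine Finset.sum_congr rfl fun i _ => ?_
  rw [hm, hder]


/-- All moments up to order `N` exist. -/
def IM (N : ℕ) (ν : Measure ℝ) : Prop := ∀ j ≤ N, Integrable (fun x : ℝ => x ^ j) ν

lemma im_conv {N : ℕ} {α ν : Measure ℝ} [IsProbabilityMeasure α] [IsProbabilityMeasure ν]
    (hα : IM N α) (hν : IM N ν) : IM N (classicalConv α ν) := by
  intro j hj
  unfold classicalConv
  rw [integrable_map_measure (by fun_prop) (by fun_prop)]
  have : ((fun x : ℝ => x ^ j) ∘ fun p : ℝ × ℝ => p.1 + p.2) =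
      fun p => ∑ i ∈ Finset.range (j + 1), (p.1 ^ i * p.2 ^ (j - i)) * (j.choose i : ℝ) := by
    ext p; simp [add_pow]
  rw [this]
  refine integrable_finsetSum _ fun i hi => ?_
  rw [Finset.mem_range] at hi
  exact ((hα i (by omega)).mul_prod (hν (j - i) (by omega))).mul_const _

lemma im_of_conv {N : ℕ} {α ν : Measure ℝ} [IsProbabilityMeasure α] [IsProbabilityMeasure ν]
    (h : IM N (classicalConv α ν)) : IM N ν := by
  have h1 : ∀ᵐ x ∂α, ∀ j, j ≤ N → Integrable (fun y : ℝ => (x + y) ^ j) ν := by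
    rw [ae_all_iff]
    intro j
    by_cases hj : j ≤ N
    · have := h j hj
      unfold classicalConv at this
      rw [integrable_map_measure (by fun_prop) (by fun_prop)] at this
      filter_upwards [this.prod_right_ae] with x hx _
      exact hx
    · exact ae_of_all _ fun x hx => absurd hx hj
  obtain ⟨x, hx⟩ := h1.exists
  intro j hj
  have : (fun y : ℝ => y ^ j) =
      fun y => ∑ i ∈ Finset.range (j + 1), (x + y) ^ i * (-x) ^ (j - i) * (j.choose i : ℝ) := by
    ext y; rw [← add_pow]; ring
  rw [this]
  refine integrable_finsetSum _ fun i hi => ?_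
  rw [Finset.mem_range] at hi
  exact ((hx i (by omega)).mul_const _).mul_const _

lemma choose_sum (f g : ℕ → ℝ) (j : ℕ) :
    ∑ i ∈ Finset.range (j + 1), (j.choose i : ℝ) * f i * g (j - i) =
      (j.factorial : ℝ) * ∑ p ∈ Finset.HasAntidiagonal.antidiagonal j,
        (f p.1 / p.1.factorial) * (g p.2 / p.2.factorial) := by
  rw [Finset.Nat.sum_antidiagonal_eq_sum_range_succ_mk, Finset.mul_sum]
  refine Finset.sum_congr rfl fun i hi => ?_
  rw [Finset.mem_range] at hi
  rw [Nat.cast_choose ℝ (by omega : i ≤ j)]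
  have := Nat.factorial_ne_zero
  field_simp

lemma mom_conv {N : ℕ} {α ν : Measure ℝ} [IsProbabilityMeasure α] [IsProbabilityMeasure ν]
    (hα : IM N α) (hν : IM N ν) (j : ℕ) (hj : j ≤ N) :
    ∫ x, x ^ j ∂(classicalConv α ν) =
      ∑ i ∈ Finset.range (j + 1), (j.choose i : ℝ) * (∫ x, x ^ i ∂α) * (∫ x, x ^ (j - i) ∂ν) := by
  unfold classicalConv
  rw [integral_map (by fun_prop) (by fun_prop)]
  simp_rw [add_pow]
  rw [integral_finsetSum]
  · refine Finset.sum_congr rfl fun i hi => ?_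
    rw [integral_mul_const, integral_prod_mul (fun x : ℝ => x ^ i) (fun x : ℝ => x ^ (j - i))]
    ring
  · intro i hi
    rw [Finset.mem_range] at hi
    exact ((hα i (by omega)).mul_prod (hν (j - i) (by omega))).mul_const _

lemma prob_convPow (ν : Measure ℝ) [IsProbabilityMeasure ν] (m : ℕ) :
    IsProbabilityMeasure (convPow ν m) := by
  induction m with
  | zero => rw [convPow]; infer_instance
  | succ m ih => rw [convPow]; exact Measure.isProbabilityMeasure_map (by fun_prop)

lemma im_convPow {N : ℕ} {ν : Measure ℝ} [IsProbabilityMeasure ν] (h : IM N ν) (m : ℕ) :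
    IM N (convPow ν m) := by
  induction m with
  | zero =>
    rw [convPow]
    intro j hj
    exact integrable_dirac (by simp)
  | succ m ih =>
    rw [convPow]
    have := prob_convPow ν m
    exact im_conv ih h

/-- Exponential generating series of the moments. -/
noncomputable def egf (ν : Measure ℝ) : PowerSeries ℝ :=
  PowerSeries.mk fun j => (∫ x, x ^ j ∂ν) / j.factorial

lemma coeff_egf_pow {N : ℕ} {ν : Measure ℝ} [IsProbabilityMeasure ν] (h : IM N ν) (m : ℕ) :
    ∀ j ≤ N, (∫ x, x ^ j ∂(convPow ν m)) / j.factorial = PowerSeries.coeff j (egf ν ^ m) := by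
  induction m with
  | zero =>
    intro j hj
    rw [convPow, integral_dirac, pow_zero, PowerSeries.coeff_one]
    rcases j with _ | j <;> simp
  | succ m ih =>
    intro j hj
    have := prob_convPow ν m
    rw [convPow, mom_conv (im_convPow h m) h j hj,
      choose_sum (fun i => ∫ x, x ^ i ∂(convPow ν m)) (fun i => ∫ x, x ^ i ∂ν), pow_succ,
      PowerSeries.coeff_mul, mul_div_cancel_left₀ _ (by exact_mod_cast Nat.factorial_ne_zero j)]
    refine Finset.sum_congr rfl fun p hp => ?_
    rw [Finset.HasAntidiagonal.mem_antidiagonal] at hp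
    rw [ih p.1 (by omega), egf, PowerSeries.coeff_mk]

lemma root_rec {N : ℕ} {ν : Measure ℝ} [IsProbabilityMeasure ν] (h : IM N ν) (n : ℕ) (j : ℕ)
    (hj : j + 1 ≤ N) :
    ∑ i ∈ Finset.range (j + 1), (j.choose i : ℝ) * (∫ x, x ^ i ∂ν) *
        (∫ x, x ^ (j - i + 1) ∂(convPow ν (n + 1))) =
      (n + 1) * ∑ i ∈ Finset.range (j + 1), (j.choose i : ℝ) *
        (∫ x, x ^ i ∂(convPow ν (n + 1))) * (∫ x, x ^ (j - i + 1) ∂ν) := by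
  rw [choose_sum (fun i => ∫ x, x ^ i ∂ν) (fun i => ∫ x, x ^ (i + 1) ∂(convPow ν (n + 1))),
    choose_sum (fun i => ∫ x, x ^ i ∂(convPow ν (n + 1))) (fun i => ∫ x, x ^ (i + 1) ∂ν),
    mul_left_comm]
  congr 1
  have hd : egf ν * PowerSeries.derivative ℝ (egf ν ^ (n + 1)) =
      PowerSeries.C ((n : ℝ) + 1) * (egf ν ^ (n + 1) * PowerSeries.derivative ℝ (egf ν)) := by
    rw [PowerSeries.derivative_pow]
    simp
    ring
  have hc := congrArg (PowerSeries.coeff j) hd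
  rw [PowerSeries.coeff_C_mul, PowerSeries.coeff_mul, PowerSeries.coeff_mul] at hc
  have fac : ∀ (x : ℝ) (l : ℕ), x / l.factorial = x / (l + 1).factorial * (l + 1) := by
    intro x l
    rw [Nat.factorial_succ]
    have := Nat.factorial_ne_zero l
    push_cast
    field_simp
  convert hc using 1
  · refine Finset.sum_congr rfl fun p hp => ?_
    rw [Finset.HasAntidiagonal.mem_antidiagonal] at hp
    rw [PowerSeries.coeff_derivative, ← coeff_egf_pow h (n + 1) _ (by omega), egf,
      PowerSeries.coeff_mk, fac _ p.2]
  · congr 1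
    refine Finset.sum_congr rfl fun p hp => ?_
    rw [Finset.HasAntidiagonal.mem_antidiagonal] at hp
    rw [PowerSeries.coeff_derivative, ← coeff_egf_pow h (n + 1) _ (by omega), egf,
      PowerSeries.coeff_mk, fac _ p.2]

lemma seq_conv (N : ℕ) (Ms as : ℕ → ℕ → ℝ) (M c : ℕ → ℝ)
    (h0 : ∀ n, Ms n 0 = 1) (ha0 : ∀ n, as n 0 = 1) (hM0 : M 0 = 1)
    (hrec : ∀ n j, j + 1 ≤ N →
      ∑ i ∈ Finset.range (j + 1), (j.choose i : ℝ) * as n i * Ms n (j - i + 1) =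
      (n + 1) * ∑ i ∈ Finset.range (j + 1), (j.choose i : ℝ) * Ms n i * as n (j - i + 1))
    (hM : ∀ j, M (j + 1) = ∑ i ∈ Finset.range (j + 1), (j.choose i : ℝ) * M i * c (j - i + 1))
    (hlim : ∀ j, 1 ≤ j → j ≤ N → Tendsto (fun n => Ms n j) atTop (𝓝 (M j))) :
    ∀ j, 1 ≤ j → j ≤ N → Tendsto (fun n : ℕ => ((n : ℝ) + 1) * as n j) atTop (𝓝 (c j)) := by
  intro j
  induction j using Nat.strong_induction_on with
  | _ j ih =>
  intro h1 hN
  obtain ⟨j, rfl⟩ : ∃ i, j = i + 1 := ⟨j - 1, by omega⟩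
  have small : ∀ i, 1 ≤ i → i ≤ j → Tendsto (fun n => as n i) atTop (𝓝 0) := by
    intro i hi hij
    have t1 := ih i (by omega) hi (by omega)
    have t2 := t1.mul (tendsto_one_div_add_atTop_nhds_zero_nat (𝕜 := ℝ))
    rw [mul_zero] at t2
    refine t2.congr fun n => ?_
    have : (n : ℝ) + 1 ≠ 0 := by positivity
    field_simp
  have e : ∀ n : ℕ, ((n : ℝ) + 1) * as n (j + 1) = Ms n (j + 1) +
      ∑ i ∈ Finset.range j, (j.choose (i + 1) : ℝ) * as n (i + 1) * Ms n (j - (i + 1) + 1) -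
      ∑ i ∈ Finset.range j, (j.choose (i + 1) : ℝ) * Ms n (i + 1) *
        (((n : ℝ) + 1) * as n (j - (i + 1) + 1)) := by
    intro n
    have := hrec n j hN
    rw [Finset.sum_range_succ', Finset.sum_range_succ', mul_add, Finset.mul_sum] at this
    simp only [Nat.choose_zero_right, h0, ha0, Nat.sub_zero, Nat.cast_one, one_mul] at this
    have e2 : ∑ i ∈ Finset.range j, (j.choose (i + 1) : ℝ) * Ms n (i + 1) *
        (((n : ℝ) + 1) * as n (j - (i + 1) + 1)) = ∑ i ∈ Finset.range j, ((n : ℝ) + 1) *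
        ((j.choose (i + 1) : ℝ) * Ms n (i + 1) * as n (j - (i + 1) + 1)) :=
      Finset.sum_congr rfl fun i _ => by ring
    rw [e2]
    linarith
  have ec : c (j + 1) = M (j + 1) +
      ∑ i ∈ Finset.range j, (j.choose (i + 1) : ℝ) * 0 * M (j - (i + 1) + 1) -
      ∑ i ∈ Finset.range j, (j.choose (i + 1) : ℝ) * M (i + 1) * c (j - (i + 1) + 1) := by
    have := hM j
    rw [Finset.sum_range_succ'] at this
    simp only [Nat.choose_zero_right, hM0, Nat.sub_zero, Nat.cast_one, one_mul] at this
    simp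
    linarith
  simp_rw [e]
  rw [ec]
  refine ((hlim _ h1 hN).add (tendsto_finsetSum _ fun i hi => ?_)).sub
    (tendsto_finsetSum _ fun i hi => ?_)
  · rw [Finset.mem_range] at hi
    exact ((small (i + 1) (by omega) (by omega)).const_mul _).mul
      (hlim _ (by omega) (by omega))
  · rw [Finset.mem_range] at hi
    exact ((hlim _ (by omega) (by omega)).const_mul _).mul
      (ih _ (by omega) (by omega) (by omega))


open Polynomial in
lemma herm (l : List ℝ) : ∀ f : ℂ → ℂ, Differentiable ℂ f → (∃ C, ∀ x : ℝ, ‖f x‖ ≤ C) →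
    ∃ q : ℂ[X], (∀ j, l.length ≤ j → q.coeff j = 0) ∧ ∃ h : ℂ → ℂ, Differentiable ℂ h ∧
      (∃ C, ∀ x : ℝ, ‖h x‖ ≤ C) ∧
      ∀ z, f z = q.eval z + (l.map fun a : ℝ => z - (a : ℂ)).prod * h z := by
  induction l with
  | nil =>
    intro f hf hb
    exact ⟨0, by simp, f, hf, hb, by simp⟩
  | cons a l ih =>
    intro f hf ⟨K, hC⟩
    have hg : Differentiable ℂ (dslope f a) := by
      rw [← differentiableOn_univ, Complex.differentiableOn_dslope Filter.univ_mem]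
      exact hf.differentiableOn
    have hgb : ∃ C, ∀ x : ℝ, ‖dslope f a x‖ ≤ C := by
      have hcont : Continuous fun x : ℝ => dslope f a x :=
        hg.continuous.comp Complex.continuous_ofReal
      obtain ⟨D, hD⟩ := (isCompact_Icc (a := a - 1) (b := a + 1)).exists_bound_of_continuousOn
        hcont.continuousOn
      refine ⟨max D (K + K), fun x => ?_⟩
      by_cases hx : x ∈ Set.Icc (a - 1) (a + 1)
      · exact (hD x hx).trans (le_max_left _ _)
      · refine le_trans ?_ (le_max_right _ _)
        have h1 : 1 ≤ |x - a| := by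
          by_contra hlt
          push Not at hlt
          rw [abs_lt] at hlt
          exact hx ⟨by linarith, by linarith⟩
        have h2 := sub_smul_dslope f (a : ℂ) x
        have h3 : ‖(x : ℂ) - a‖ * ‖dslope f a x‖ ≤ K + K := by
          rw [← norm_smul, h2]
          exact (norm_sub_le _ _).trans (add_le_add (hC x) (hC a))
        rw [← Complex.ofReal_sub, Complex.norm_real, Real.norm_eq_abs] at h3
        exact (le_mul_of_one_le_left (norm_nonneg _) h1).trans h3
    obtain ⟨q, hq, h, hh, hhb, he⟩ := ih _ hg hgb
    refine ⟨Polynomial.C (f a) + (X - Polynomial.C (a : ℂ)) * q, ?_, h, hh, hhb, fun z => ?_⟩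
    · intro j hj
      obtain ⟨j, rfl⟩ : ∃ i, j = i + 1 := ⟨j - 1, by simp at hj; omega⟩
      simp only [List.length_cons] at hj
      rw [coeff_add, sub_mul, coeff_sub, coeff_X_mul, coeff_C_mul, hq j (by omega),
        hq (j + 1) (by omega), coeff_C]
      simp
    · have h2 := sub_smul_dslope f (a : ℂ) z
      rw [he z, smul_eq_mul] at h2
      simp only [List.map_cons, List.prod_cons, eval_add, eval_mul, eval_sub, eval_X, eval_C]
      linear_combination -h2

open Polynomial in
lemma low_coeffs (q : ℂ[X]) (u : ℂ) (R : ℂ → ℂ) (hR : Differentiable ℂ R)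
    (h : ∀ z, Complex.exp (Complex.I * u * z) - 1 = q.eval z + z ^ 3 * R z) :
    q.coeff 0 = 0 ∧ q.coeff 1 = Complex.I * u ∧ q.coeff 2 = - u ^ 2 / 2 := by
  have hR' : Differentiable ℂ (deriv R) := by
    rw [← differentiableOn_univ]
    exact hR.differentiableOn.deriv isOpen_univ
  have hE : ∀ z, HasDerivAt (fun z => Complex.exp (Complex.I * u * z))
      (Complex.exp (Complex.I * u * z) * (Complex.I * u)) z := by
    intro z
    simpa using ((hasDerivAt_id z).const_mul (Complex.I * u)).cexp
  have h1 : ∀ z, q.derivative.eval z = Complex.exp (Complex.I * u * z) * (Complex.I * u) -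
      z ^ 2 * (3 * R z + z * deriv R z) := by
    intro z
    have e : (fun z => q.eval z) = fun z => Complex.exp (Complex.I * u * z) - 1 - z ^ 3 * R z := by
      ext z; rw [h z]; ring
    have d1 := q.hasDerivAt z
    rw [e] at d1
    have d2 := ((hE z).sub_const 1).sub (((hasDerivAt_id z).pow 3).mul (hR z).hasDerivAt)
    have := d1.unique d2
    rw [this]
    simp
    ring
  refine ⟨?_, ?_, ?_⟩
  · have := h 0
    rw [coeff_zero_eq_eval_zero]
    simpa using this.symm
  · have := h1 0
    rw [← coeff_zero_eq_eval_zero, coeff_derivative] at this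
    simpa using this
  · have d1 := q.derivative.hasDerivAt 0
    rw [funext h1] at d1
    have d2 := ((hE 0).mul_const (Complex.I * u)).sub (((hasDerivAt_id (0 : ℂ)).pow 2).mul
      (((hR 0).const_mul 3).add (differentiableAt_id.mul (hR' 0))).hasDerivAt)
    have := d1.unique d2
    rw [← coeff_zero_eq_eval_zero, coeff_derivative, coeff_derivative] at this
    simp at this
    have hI := Complex.I_sq
    linear_combination (1 / 2) * this + (u ^ 2 / 2) * hI

open Polynomial in
lemma int_poly {N : ℕ} {ν : Measure ℝ} (h : IM N ν) (q : ℂ[X]) (hq : ∀ j, N < j → q.coeff j = 0) :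
    Integrable (fun x : ℝ => q.eval (x : ℂ)) ν ∧
    ∫ x, q.eval (x : ℂ) ∂ν =
      ∑ j ∈ Finset.range (N + 1), q.coeff j * ((∫ x, x ^ j ∂ν : ℝ) : ℂ) := by
  have hdeg : q.natDegree < N + 1 := by
    rw [Nat.lt_succ_iff, natDegree_le_iff_coeff_eq_zero]
    exact hq
  have he : (fun x : ℝ => q.eval (x : ℂ)) =
      fun x => ∑ j ∈ Finset.range (N + 1), q.coeff j * ((x ^ j : ℝ) : ℂ) := by
    ext x
    rw [eval_eq_sum_range' hdeg]
    simp
  have hi : ∀ j ∈ Finset.range (N + 1),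
      Integrable (fun x : ℝ => q.coeff j * ((x ^ j : ℝ) : ℂ)) ν := by
    intro j hj
    rw [Finset.mem_range] at hj
    exact ((h j (by omega)).ofReal).const_mul _
  rw [he]
  refine ⟨integrable_finsetSum _ hi, ?_⟩
  rw [integral_finsetSum _ hi]
  refine Finset.sum_congr rfl fun j _ => ?_
  rw [integral_const_mul, integral_complex_ofReal]

open Polynomial in
lemma lim_poly {N : ℕ} (hN : 2 ≤ N) (γ s : ℝ) {k : ℕ} (b lam : Fin k → ℝ) (ν : ℕ → Measure ℝ)
    (h : ∀ n, IM N (ν n))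
    (hc : ∀ j, 1 ≤ j → j ≤ N → Tendsto (fun n : ℕ => ((n : ℝ) + 1) * ∫ x, x ^ j ∂(ν n)) atTop
      (𝓝 (cum γ s b lam j)))
    (q : ℂ[X]) (hq : ∀ j, N < j → q.coeff j = 0) (h0 : q.coeff 0 = 0) :
    Tendsto (fun n : ℕ => ((n : ℂ) + 1) * ∫ x, q.eval (x : ℂ) ∂(ν n)) atTop
      (𝓝 (q.coeff 1 * γ + q.coeff 2 * s ^ 2 + ∑ i, lam i * q.eval (b i : ℂ))) := by
  have hdeg : q.natDegree < N + 1 := by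
    rw [Nat.lt_succ_iff, natDegree_le_iff_coeff_eq_zero]
    exact hq
  have e : q.coeff 1 * γ + q.coeff 2 * s ^ 2 + ∑ i, lam i * q.eval (b i : ℂ) =
      ∑ j ∈ Finset.range (N + 1), q.coeff j * (cum γ s b lam j : ℂ) := by
    simp only [cum, Complex.ofReal_add, mul_add, Finset.sum_add_distrib]
    congr 1
    · congr 1
      · rw [Finset.sum_eq_single 1]
        · simp
        · intro j _ hj; simp [hj]
        · intro hj; simp at hj; omega
      · rw [Finset.sum_eq_single 2]
        · simp
        · intro j _ hj; simp [hj]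
        · intro hj; simp at hj; omega
    · simp only [Complex.ofReal_sum, Finset.mul_sum]
      rw [Finset.sum_comm]
      refine Finset.sum_congr rfl fun i _ => ?_
      rw [eval_eq_sum_range' hdeg, Finset.mul_sum]
      refine Finset.sum_congr rfl fun j _ => ?_
      push_cast; ring
  rw [e]
  have e2 : ∀ n : ℕ, ((n : ℂ) + 1) * ∫ x, q.eval (x : ℂ) ∂(ν n) =
      ∑ j ∈ Finset.range (N + 1), q.coeff j *
        (((((n : ℝ) + 1) * ∫ x, x ^ j ∂(ν n) : ℝ)) : ℂ) := by
    intro n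
    rw [(int_poly (h n) q hq).2, Finset.mul_sum]
    refine Finset.sum_congr rfl fun j _ => ?_
    push_cast; ring
  simp_rw [e2]
  refine tendsto_finsetSum _ fun j hj => ?_
  rcases Nat.eq_zero_or_pos j with rfl | hj0
  · simp [h0]
  · rw [Finset.mem_range] at hj
    exact ((Complex.continuous_ofReal.tendsto _).comp (hc j hj0 (by omega))).const_mul _

open Polynomial in
lemma lim_exp (γ s : ℝ) {k : ℕ} (b lam : Fin k → ℝ) (ν : ℕ → Measure ℝ)
    (hp : ∀ n, IsProbabilityMeasure (ν n))
    (h : ∀ n, IM (2 * k + 4) (ν n))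
    (hc : ∀ j, 1 ≤ j → j ≤ 2 * k + 4 →
      Tendsto (fun n : ℕ => ((n : ℝ) + 1) * ∫ x, x ^ j ∂(ν n)) atTop (𝓝 (cum γ s b lam j)))
    (u : ℝ) :
    Tendsto (fun n : ℕ => ((n : ℂ) + 1) * (charFn (ν n) u - 1)) atTop
      (𝓝 (Complex.I * (γ : ℂ) * (u : ℂ) - (s : ℂ) ^ 2 * (u : ℂ) ^ 2 / 2
        + ∑ i, (lam i : ℂ) * (Complex.exp (Complex.I * (u : ℂ) * (b i : ℂ)) - 1))) := by
  obtain ⟨q, hq, g, hg, ⟨C, hC⟩, he⟩ := herm ([0, 0, 0, 0] ++ (List.ofFn b ++ List.ofFn b))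
    (fun z => Complex.exp (Complex.I * u * z) - 1) (by fun_prop) ⟨2, fun x => by
      refine (norm_sub_le _ _).trans ?_
      have : Complex.I * u * x = ((u * x : ℝ) : ℂ) * Complex.I := by push_cast; ring
      rw [this, Complex.norm_exp_ofReal_mul_I]
      norm_num⟩
  set W : ℂ[X] := (X ^ 2 * ∏ i, (X - Polynomial.C (b i : ℂ))) ^ 2 with hW
  have hWe : ∀ z : ℂ, W.eval z = (z ^ 2 * ∏ i, (z - (b i : ℂ))) ^ 2 := by
    intro z; simp [hW, eval_prod]
  have he' : ∀ z : ℂ, Complex.exp (Complex.I * u * z) - 1 = q.eval z + W.eval z * g z := by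
    intro z
    rw [he z, hWe]
    simp only [List.map_append, List.prod_append, List.map_ofFn, List.prod_ofFn, Function.comp_def,
      List.map_cons, List.map_nil, List.prod_cons, List.prod_nil, Complex.ofReal_zero]
    ring
  have hq' : ∀ j, 2 * k + 4 < j → q.coeff j = 0 := by
    intro j hj
    apply hq
    simp; omega
  obtain ⟨q0, q1, q2⟩ := low_coeffs q u (fun z => z * (∏ i, (z - (b i : ℂ))) ^ 2 * g z)
    (by fun_prop) (by intro z; rw [he', hWe]; ring)
  have qb : ∀ i, q.eval (b i : ℂ) = Complex.exp (Complex.I * u * b i) - 1 := by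
    intro i
    have : W.eval (b i : ℂ) = 0 := by
      rw [hWe, Finset.prod_eq_zero (Finset.mem_univ i) (by simp)]; simp
    rw [he', this]; simp
  have L1 := lim_poly (by omega) γ s b lam ν h hc q hq' q0
  have hWc : ∀ j, 2 * k + 4 < j → W.coeff j = 0 := by
    rw [← natDegree_le_iff_coeff_eq_zero]
    have h1 : (∏ i, (X - Polynomial.C (b i : ℂ))).natDegree ≤ k := by
      refine (natDegree_prod_le _ _).trans ?_
      simp
    refine natDegree_pow_le.trans ?_
    have := natDegree_mul_le (p := (X ^ 2 : ℂ[X])) (q := ∏ i, (X - Polynomial.C (b i : ℂ)))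
    rw [natDegree_X_pow] at this
    omega
  have hW4 : W = X ^ 4 * (∏ i, (X - Polynomial.C (b i : ℂ))) ^ 2 := by rw [hW]; ring
  have hWl : ∀ j, j < 4 → W.coeff j = 0 := by
    intro j hj
    rw [hW4, coeff_X_pow_mul']
    simp; omega
  have L2 := lim_poly (by omega) γ s b lam ν h hc W hWc (hWl 0 (by norm_num))
  have z2 : W.coeff 1 * γ + W.coeff 2 * s ^ 2 + ∑ i, lam i * W.eval (b i : ℂ) = 0 := by
    rw [hWl 1 (by norm_num), hWl 2 (by norm_num), Finset.sum_eq_zero]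
    · simp
    · intro i _
      rw [hWe, Finset.prod_eq_zero (Finset.mem_univ i) (by simp)]; simp
  rw [z2] at L2
  have hgc : Continuous fun x : ℝ => g x := hg.continuous.comp Complex.continuous_ofReal
  have hWr : ∀ x : ℝ, W.eval (x : ℂ) = (((x ^ 2 * ∏ i, (x - b i)) ^ 2 : ℝ) : ℂ) := by
    intro x; rw [hWe]; push_cast; rfl
  have hWn : ∀ n, ∫ x : ℝ, ‖W.eval (x : ℂ)‖ ∂(ν n) = ‖∫ x : ℝ, W.eval (x : ℂ) ∂(ν n)‖ := by
    intro n
    simp_rw [hWr]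
    rw [integral_complex_ofReal, Complex.norm_real, Real.norm_of_nonneg
      (integral_nonneg fun x => sq_nonneg _)]
    refine integral_congr_ae (ae_of_all _ fun x => ?_)
    simp only
    rw [Complex.norm_real, Real.norm_of_nonneg (sq_nonneg _)]
  have hWint := fun n => (int_poly (h n) W hWc).1
  have hqint := fun n => (int_poly (h n) q hq').1
  have hWg : ∀ n, Integrable (fun x : ℝ => W.eval (x : ℂ) * g x) (ν n) := fun n =>
    (hWint n).mul_bdd (c := C) hgc.aestronglyMeasurable (ae_of_all _ hC)
  have L3 : Tendsto (fun n : ℕ => ((n : ℂ) + 1) * ∫ x : ℝ, W.eval (x : ℂ) * g x ∂(ν n)) atTop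
      (𝓝 0) := by
    have L2' := (L2.norm.const_mul C)
    rw [norm_zero, mul_zero] at L2'
    refine squeeze_zero_norm (fun n => ?_) L2'
    rw [norm_mul, norm_mul, mul_left_comm]
    refine mul_le_mul_of_nonneg_left ?_ (norm_nonneg _)
    refine (norm_integral_le_integral_norm _).trans ?_
    rw [← hWn, ← integral_const_mul]
    refine integral_mono (hWg n).norm ((hWint n).norm.const_mul C) fun x => ?_
    simp only [norm_mul]
    rw [mul_comm]
    exact mul_le_mul_of_nonneg_right (hC x) (norm_nonneg _)
  have L4 := L1.add L3
  have hlim : q.coeff 1 * γ + q.coeff 2 * s ^ 2 + ∑ i, lam i * q.eval (b i : ℂ) + 0 =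
    Complex.I * (γ : ℂ) * (u : ℂ) - (s : ℂ) ^ 2 * (u : ℂ) ^ 2 / 2
        + ∑ i, (lam i : ℂ) * (Complex.exp (Complex.I * (u : ℂ) * (b i : ℂ)) - 1) := by
    simp_rw [qb]
    rw [q1, q2]; ring
  rw [hlim] at L4
  refine L4.congr fun n => ?_
  rw [← mul_add, ← integral_add (hqint n) (hWg n)]
  congr 1
  simp_rw [← he']
  have := hp n
  rw [integral_sub _ (integrable_const _)]
  · simp [charFn]
  · refine (integrable_const (1 : ℝ)).mono' (by fun_prop) (ae_of_all _ fun x => ?_)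
    have : Complex.I * u * x = ((u * x : ℝ) : ℂ) * Complex.I := by push_cast; ring
    rw [this, Complex.norm_exp_ofReal_mul_I]

lemma charFn_convPow (ν : Measure ℝ) [IsProbabilityMeasure ν] (m : ℕ) (u : ℝ) :
    charFn (convPow ν m) u = charFn ν u ^ m := by
  induction m with
  | zero => rw [convPow]; simp [charFn]
  | succ m ih =>
    have := prob_convPow ν m
    rw [pow_succ, ← ih, convPow, charFn_eq, charFn_eq, charFn_eq]
    exact charFun_conv u

end MC

theorem moment_convergence_to_finite_levy_infdiv_law
    (γ : ℝ) (s : ℝ) (hs : 0 ≤ s)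
    (k : ℕ)
    (b : Fin k → ℝ) (hb : Function.Injective b) (hb0 : ∀ i, b i ≠ 0)
    (lam : Fin k → ℝ) (hlam : ∀ i, 0 < lam i)
    (μ : Measure ℝ) (hprob : IsProbabilityMeasure μ)
    (hchar : ∀ u : ℝ, charFn μ u =
      Complex.exp (Complex.I * (γ : ℂ) * (u : ℂ) - (s : ℂ) ^ 2 * (u : ℂ) ^ 2 / 2
        + ∑ i, (lam i : ℂ) * (Complex.exp (Complex.I * (u : ℂ) * (b i : ℂ)) - 1)))
    (μs : ℕ → Measure ℝ)
    (hprobs : ∀ n, IsProbabilityMeasure (μs n))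
    (hID : ∀ n, IsClassicallyInfDiv (μs n))
    (hfin : ∀ n, ∀ i : ℕ, i ≤ 2 * k + 4 → Integrable (fun x => x ^ i) (μs n))
    (hmom : ∀ i : ℕ, 1 ≤ i → i ≤ 2 * k + 4 →
      Tendsto (fun n => ∫ x, x ^ i ∂(μs n)) atTop (𝓝 (∫ x, x ^ i ∂μ))) :
    WeakConv μs μ := by
  have hgood := MC.good_mu γ s k b lam hlam μ hprob hchar
  choose ν hν using fun n => hID n (n + 1) (by omega)
  have hp : ∀ n, IsProbabilityMeasure (ν n) := fun n => (hν n).1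
  have him : ∀ n, MC.IM (2 * k + 4) (ν n) := by
    intro n
    have h1 : MC.IM (2 * k + 4) (μs n) := hfin n
    rw [(hν n).2, convPow] at h1
    have := MC.prob_convPow (ν n) n
    exact MC.im_of_conv h1
  have hc := MC.seq_conv (2 * k + 4) (fun n j => ∫ x, x ^ j ∂(μs n)) (fun n j => ∫ x, x ^ j ∂(ν n))
    (fun j => ∫ x, x ^ j ∂μ) (MC.cum γ s b lam) (by simp) (by simp) (by simp)
    (by
      intro n j hj
      have := MC.root_rec (him n) n j hj
      rw [← (hν n).2] at this
      exact this)
    (MC.mom_rec γ s k b lam μ hgood) hmom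
  have hcf : ∀ u : ℝ, Tendsto (fun n => charFun (μs n) u) atTop (𝓝 (charFun μ u)) := by
    intro u
    have L := MC.lim_exp γ s b lam ν hp him hc u
    rw [← MC.charFn_eq, hchar]
    have L2 := Complex.tendsto_one_add_pow_exp_of_tendsto
      (g := fun m => charFn (ν (m - 1)) u - 1) (by
        rw [← tendsto_add_atTop_iff_nat 1]
        simpa using L)
    have L3 := L2.comp (tendsto_add_atTop_nat 1)
    refine L3.congr fun n => ?_
    rw [← MC.charFn_eq, (hν n).2, MC.charFn_convPow]
    simp
  have T := ProbabilityMeasure.tendsto_of_tendsto_charFun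
    (μ := fun n => (⟨μs n, hprobs n⟩ : ProbabilityMeasure ℝ)) (μ₀ := ⟨μ, hprob⟩) hcf
  exact ProbabilityMeasure.tendsto_iff_forall_integral_tendsto.mp T
end
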